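/- arXiv:1607.01892 — 2 statements merged into one kernel-verified Lean document; each statement's English description precedes it below -/
import Mathlib

section
/- Let τ = τ_n → 0 and suppose k_M < 1 and f_τ ↑ ∞ as τ → 0. Then for any fixed L > 0 and any index i in the set M = {1 ≤ i ≤ n : f_τ τ ≤ |θ_{0,i}| ≤ k_M ζ_τ}, the marginal credible interval fails to cover: P_{θ_0}( θ_{0,i} ∉ Ĉ_ni(L, τ) ) → 1. -/
open MeasureTheory ProbabilityTheory Filter Set Real Asymptotics
open scoped ENNReal NNReal BigOperators

noncomputable section

/-- Standard normal density `φ`. -/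
def phiN (x : ℝ) : ℝ := (Real.sqrt (2 * Real.pi))⁻¹ * Real.exp (-(x ^ 2) / 2)

/-- Horseshoe prior density with global parameter `τ`. -/
def gHS (τ θ : ℝ) : ℝ :=
  ∫ l in Set.Ioi (0 : ℝ), phiN (θ / (l * τ)) / (l * τ) * (2 / (Real.pi * (1 + l ^ 2)))

/-- Unnormalised marginal posterior density of `θᵢ` given `Yᵢ = y` (parameter `τ`). -/
def postDens (τ y θ : ℝ) : ℝ := phiN (y - θ) * gHS τ θ

/-- Bayesian marginal density `ψ_τ(y)` of one observation. -/
def margDens (τ y : ℝ) : ℝ := ∫ θ, postDens τ y θ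

/-- Marginal posterior probability `Π(θᵢ ∈ A | Yᵢ = y, τ)`. -/
def postProb (τ y : ℝ) (A : Set ℝ) : ℝ := (∫ θ in A, postDens τ y θ) / margDens τ y

/-- Marginal posterior mean `θ̂ᵢ(τ)`. -/
def postMean (τ y : ℝ) : ℝ := (∫ θ, θ * postDens τ y θ) / margDens τ y

/-- Marginal posterior variance. -/
def postVar (τ y : ℝ) : ℝ :=
  (∫ θ, (θ - postMean τ y) ^ 2 * postDens τ y θ) / margDens τ y

/-- Marginal posterior fourth central moment. -/
def postMom4 (τ y : ℝ) : ℝ :=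
  (∫ θ, (θ - postMean τ y) ^ 4 * postDens τ y θ) / margDens τ y

/-- `ζ_τ = √(2 log (1/τ))`. -/
def zet (τ : ℝ) : ℝ := Real.sqrt (2 * Real.log (1 / τ))

/-- `τ_n(p) = (p/n) √(log (n/p))`. -/
def tauOpt (n p : ℕ) : ℝ := ((p : ℝ) / (n : ℝ)) * Real.sqrt (Real.log ((n : ℝ) / (p : ℝ)))

/-- The law `P_{θ₀}` of `Y^n`. -/
def Pdata {n : ℕ} (θ₀ : Fin n → ℝ) : Measure (Fin n → ℝ) :=
  Measure.pi fun i => gaussianReal (θ₀ i) 1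

/-- The standard normal upper `α`-quantile `z_α`. -/
def zquant (α : ℝ) : ℝ := sInf {z : ℝ | ((gaussianReal 0 1) (Set.Ioi z)).toReal ≤ α}

/-- Nearly black vectors `ℓ₀[p]`. -/
def nearlyBlack (n p : ℕ) : Set (Fin n → ℝ) :=
  {θ | ({i | θ i ≠ 0} : Set (Fin n)).ncard ≤ p}

/-- Unnormalised posterior density of the full vector `θ` given `Y^n = y` and `τ`. -/
def fullDens {n : ℕ} (τ : ℝ) (y θ : Fin n → ℝ) : ℝ := ∏ i, postDens τ (y i) (θ i)

/-- Posterior probability `Π(θ ∈ A | Y^n = y, τ)` of a set of vectors. -/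
def fullPostProb {n : ℕ} (τ : ℝ) (y : Fin n → ℝ) (A : Set (Fin n → ℝ)) : ℝ :=
  (∫ θ in A, fullDens τ y θ) / ∫ θ, fullDens τ y θ

/-- Posterior mean of the full vector (coordinatewise, by conditional independence). -/
def fullPostMean {n : ℕ} (τ : ℝ) (y : Fin n → ℝ) : Fin n → ℝ := fun i => postMean τ (y i)

/-- Euclidean distance on `ℝⁿ`. -/
def l2dist {n : ℕ} (a b : Fin n → ℝ) : ℝ := Real.sqrt (∑ i, (a i - b i) ^ 2)

/-- Marginal likelihood of `τ`. -/
def lik {n : ℕ} (τ : ℝ) (y : Fin n → ℝ) : ℝ := ∏ i, margDens τ (y i)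

/-- Unnormalised hierarchical posterior weight of `τ` given the data. -/
def hierWeight {n : ℕ} (pr : ℝ → ℝ) (y : Fin n → ℝ) (τ : ℝ) : ℝ := pr τ * lik τ y

/-- Hierarchical posterior distribution of `τ`. -/
def hierTauProb {n : ℕ} (pr : ℝ → ℝ) (y : Fin n → ℝ) (A : Set ℝ) : ℝ :=
  (∫ τ in A, hierWeight pr y τ) / ∫ τ, hierWeight pr y τ

/-- Hierarchical marginal posterior probability for coordinate `i`. -/
def hierPostProb {n : ℕ} (pr : ℝ → ℝ) (y : Fin n → ℝ) (i : Fin n) (A : Set ℝ) : ℝ :=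
  (∫ τ, hierWeight pr y τ * postProb τ (y i) A) / ∫ τ, hierWeight pr y τ

/-- Hierarchical marginal posterior mean for coordinate `i`. -/
def hierPostMean {n : ℕ} (pr : ℝ → ℝ) (y : Fin n → ℝ) (i : Fin n) : ℝ :=
  (∫ τ, hierWeight pr y τ * postMean τ (y i)) / ∫ τ, hierWeight pr y τ

/-- Hierarchical posterior probability of a set of vectors. -/
def hierFullPostProb {n : ℕ} (pr : ℝ → ℝ) (y : Fin n → ℝ) (A : Set (Fin n → ℝ)) : ℝ :=
  (∫ τ, pr τ * ∫ θ in A, fullDens τ y θ) / ∫ τ, pr τ * ∫ θ, fullDens τ y θ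

/-- Hierarchical posterior mean vector. -/
def hierFullPostMean {n : ℕ} (pr : ℝ → ℝ) (y : Fin n → ℝ) : Fin n → ℝ :=
  fun i => hierPostMean pr y i

/-- The functions `I_k`. -/
def Ik (τ k y : ℝ) : ℝ :=
  ∫ z in Set.Ioc (0 : ℝ) 1, z ^ k * (τ ^ 2 + (1 - τ ^ 2) * z)⁻¹ * Real.exp (y ^ 2 * z / 2)

/-- The function `m_τ`. -/
def mHS (τ y : ℝ) : ℝ :=
  y ^ 2 * ((Ik τ (1 / 2) y - Ik τ (3 / 2) y) / Ik τ (-(1 / 2)) y) -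
    Ik τ (1 / 2) y / Ik τ (-(1 / 2)) y

/-- The excessive-bias restriction with witness `q`. -/
def EBRwith (n : ℕ) (A Cs C : ℝ) (θ : Fin n → ℝ) (q : ℕ) : Prop :=
  1 ≤ q ∧
    (∑ i, if |θ i| < A * Real.sqrt (2 * Real.log ((n : ℝ) / (q : ℝ))) then (θ i) ^ 2 else 0)
        ≤ C * (q : ℝ) * Real.log ((n : ℝ) / (q : ℝ)) ∧
    (q : ℝ) / Cs ≤
      (({i | A * Real.sqrt (2 * Real.log ((n : ℝ) / (q : ℝ))) ≤ |θ i|} : Set (Fin n)).ncard : ℝ)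

/-- The excessive-bias restriction. -/
def EBR (n : ℕ) (A Cs C : ℝ) (θ : Fin n → ℝ) : Prop := ∃ q, EBRwith n A Cs C θ q

/-- The class `Θ[p]`. -/
def ThetaClass (n p : ℕ) (A Cs C : ℝ) : Set (Fin n → ℝ) :=
  {θ | θ ∈ nearlyBlack n p ∧ EBR n A Cs C θ}

/-- Smallest witness `q` in the excessive-bias restriction. -/
def qmin (n : ℕ) (A Cs C : ℝ) (θ : Fin n → ℝ) : ℕ := sInf {q | EBRwith n A Cs C θ q}

/-- `p̃(θ₀)`: the number of coordinates above threshold for the smallest witness `q`. -/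
def ptilde (n : ℕ) (A Cs C : ℝ) (θ : Fin n → ℝ) : ℕ :=
  ({i | A * Real.sqrt (2 * Real.log ((n : ℝ) / (qmin n A Cs C θ : ℝ))) ≤ |θ i|} :
    Set (Fin n)).ncard

lemma aux_exp (u : ℝ) (hu : 0 ≤ u) : Real.exp (-u) ≤ 4 / (1 + u) ^ 2 := by
  have h1 : u / 2 + 1 ≤ Real.exp (u / 2) := Real.add_one_le_exp _
  have h2 : Real.exp (u / 2) * Real.exp (u / 2) * Real.exp (-u) = 1 := by
    rw [← Real.exp_add, ← Real.exp_add]; simp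
  have h3 : (1 + u) ^ 2 ≤ 4 * (Real.exp (u / 2) * Real.exp (u / 2)) := by nlinarith
  rw [le_div_iff₀ (by positivity)]
  nlinarith [Real.exp_pos (-u)]

lemma sqrt2pi_inv_le : (Real.sqrt (2 * Real.pi))⁻¹ ≤ 1 := by
  apply inv_le_one_of_one_le₀
  rw [Real.one_le_sqrt]
  nlinarith [Real.pi_gt_three]

lemma phiN_nonneg (x : ℝ) : 0 ≤ phiN x := by unfold phiN; positivity

lemma phiN_le_one (x : ℝ) : phiN x ≤ 1 := by
  unfold phiN
  have h : Real.exp (-(x ^ 2) / 2) ≤ 1 := by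
    rw [Real.exp_le_one_iff]; nlinarith [sq_nonneg x]
  calc _ ≤ (1 : ℝ) * 1 := by
        gcongr
        exact sqrt2pi_inv_le
    _ = 1 := by norm_num

/-- integrand of the horseshoe prior -/
def hsInt (τ θ l : ℝ) : ℝ := phiN (θ / (l * τ)) / (l * τ) * (2 / (Real.pi * (1 + l ^ 2)))

lemma hsInt_nonneg {τ θ l : ℝ} (hτ : 0 < τ) (hl : 0 < l) : 0 ≤ hsInt τ θ l := by
  unfold hsInt
  have := phiN_nonneg (θ / (l * τ))
  positivity

lemma hsInt_le {τ θ l : ℝ} (hτ : 0 < τ) (hθ : θ ≠ 0) (hl : 0 < l) :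
    hsInt τ θ l ≤ 4 * l / (τ * (l ^ 2 + θ ^ 2 / (2 * τ ^ 2)) ^ 2) := by
  unfold hsInt phiN
  have hu := aux_exp (θ ^ 2 / (2 * l ^ 2 * τ ^ 2)) (by positivity)
  have e1 : -(θ / (l * τ)) ^ 2 / 2 = -(θ ^ 2 / (2 * l ^ 2 * τ ^ 2)) := by field_simp
  rw [e1]
  have h2 : 2 / (Real.pi * (1 + l ^ 2)) ≤ 1 / l ^ 2 := by
    rw [div_le_div_iff₀ (by positivity) (by positivity)]
    nlinarith [Real.pi_gt_three, sq_nonneg l, mul_pos Real.pi_pos (pow_pos hl 2)]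
  calc _ ≤ 1 * (4 / (1 + θ ^ 2 / (2 * l ^ 2 * τ ^ 2)) ^ 2) / (l * τ) * (1 / l ^ 2) := by
        gcongr
        exact sqrt2pi_inv_le
    _ = _ := by field_simp

lemma bound_int {τ b : ℝ} (hτ : 0 < τ) (hb : 0 < b) :
    IntegrableOn (fun l : ℝ => 4 * l / (τ * (l ^ 2 + b) ^ 2)) (Ioi 0) ∧
    ∫ l in Ioi (0 : ℝ), 4 * l / (τ * (l ^ 2 + b) ^ 2) = 2 / (τ * b) := by
  have hd : ∀ x ∈ Ici (0 : ℝ), HasDerivAt (fun l : ℝ => -(2 / τ) * (l ^ 2 + b)⁻¹)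
      (4 * x / (τ * (x ^ 2 + b) ^ 2)) x := by
    intro x _
    have h0 : x ^ 2 + b ≠ 0 := by positivity
    have := (((hasDerivAt_pow 2 x).add_const b).inv h0).const_mul (-(2 / τ))
    refine HasDerivAt.congr_deriv this ?_
    norm_num
    field_simp
    ring
  have hn : ∀ x ∈ Ioi (0 : ℝ), 0 ≤ 4 * x / (τ * (x ^ 2 + b) ^ 2) := by
    intro x hx
    have : (0 : ℝ) < x := hx
    positivity
  have ht : Tendsto (fun l : ℝ => -(2 / τ) * (l ^ 2 + b)⁻¹) atTop (nhds (-(2 / τ) * 0)) := by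
    apply Tendsto.const_mul
    apply tendsto_inv_atTop_zero.comp
    apply tendsto_atTop_add_const_right
    exact tendsto_pow_atTop (by norm_num)
  refine ⟨integrableOn_Ioi_deriv_of_nonneg' hd hn ht, ?_⟩
  rw [integral_Ioi_of_hasDerivAt_of_nonneg' hd hn ht]
  field_simp
  ring

lemma hsInt_integrable {τ θ : ℝ} (hτ : 0 < τ) (hθ : θ ≠ 0) :
    IntegrableOn (hsInt τ θ) (Ioi 0) := by
  refine Integrable.mono' (bound_int hτ (b := θ ^ 2 / (2 * τ ^ 2)) (by positivity)).1 ?_ ?_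
  · apply Measurable.aestronglyMeasurable
    unfold hsInt phiN
    fun_prop
  · refine (ae_restrict_iff' measurableSet_Ioi).2 (ae_of_all _ fun l hl => ?_)
    rw [Real.norm_of_nonneg (hsInt_nonneg hτ hl)]
    exact hsInt_le hτ hθ hl

lemma gHS_eq (τ θ : ℝ) : gHS τ θ = ∫ l in Ioi (0 : ℝ), hsInt τ θ l := rfl

lemma gHS_nonneg {τ : ℝ} (θ : ℝ) (hτ : 0 < τ) : 0 ≤ gHS τ θ :=
  setIntegral_nonneg measurableSet_Ioi fun _ hl => hsInt_nonneg hτ hl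

lemma gHS_le {τ θ : ℝ} (hτ : 0 < τ) (hθ : θ ≠ 0) : gHS τ θ ≤ 4 * τ / θ ^ 2 := by
  have hb := bound_int hτ (b := θ ^ 2 / (2 * τ ^ 2)) (by positivity)
  rw [gHS_eq]
  calc _ ≤ _ := setIntegral_mono_on (hsInt_integrable hτ hθ) hb.1 measurableSet_Ioi
        fun l hl => hsInt_le hτ hθ hl
    _ = _ := hb.2
    _ = _ := by field_simp; norm_num

/-- lower constant -/
def cLow : ℝ := (Real.sqrt (2 * Real.pi))⁻¹ * Real.exp (-1 / 2) / 2 * (2 / (Real.pi * 5))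

lemma cLow_pos : 0 < cLow := by unfold cLow; positivity

lemma hsInt_ge {τ θ l : ℝ} (hτ : 0 < τ) (hθ : |θ| ≤ τ) (hl : l ∈ Ioc (1 : ℝ) 2) :
    cLow / τ ≤ hsInt τ θ l := by
  obtain ⟨h1, h2⟩ := hl
  have hl0 : 0 < l := by linarith
  unfold hsInt phiN cLow
  have e : (θ / (l * τ)) ^ 2 ≤ 1 := by
    rw [sq_le_one_iff_abs_le_one, abs_div, abs_of_pos (show 0 < l * τ by positivity),
      div_le_one (by positivity)]
    nlinarith
  calc _ = (Real.sqrt (2 * Real.pi))⁻¹ * Real.exp (-1 / 2) / (2 * τ) * (2 / (Real.pi * 5)) := by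
        field_simp
    _ ≤ _ := by
        have : (1 : ℝ) + l ^ 2 ≤ 5 := by nlinarith
        gcongr

lemma gHS_ge {τ θ : ℝ} (hτ : 0 < τ) (h0 : θ ≠ 0) (hθ : |θ| ≤ τ) : cLow / τ ≤ gHS τ θ := by
  rw [gHS_eq]
  have hi := hsInt_integrable hτ h0
  have hs : Ioc (1 : ℝ) 2 ⊆ Ioi 0 := fun x hx => lt_trans one_pos hx.1
  calc cLow / τ = ∫ l in Ioc (1 : ℝ) 2, cLow / τ := by
        simp; norm_num
    _ ≤ ∫ l in Ioc (1 : ℝ) 2, hsInt τ θ l :=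
        setIntegral_mono_on (integrableOn_const (by simp)) (hi.mono_set hs) measurableSet_Ioc
          fun l hl => hsInt_ge hτ hθ hl
    _ ≤ _ := setIntegral_mono_set hi
        ((ae_restrict_iff' measurableSet_Ioi).2 (ae_of_all _ fun l hl => hsInt_nonneg hτ hl))
        hs.eventuallyLE

lemma phiN_neg (x : ℝ) : phiN (-x) = phiN x := by simp [phiN]

lemma gHS_neg (τ θ : ℝ) : gHS τ (-θ) = gHS τ θ := by
  unfold gHS; simp only [neg_div, phiN_neg]

lemma postDens_nonneg {τ : ℝ} (y θ : ℝ) (hτ : 0 < τ) : 0 ≤ postDens τ y θ :=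
  mul_nonneg (phiN_nonneg _) (gHS_nonneg _ hτ)

lemma phiN_ge {y θ : ℝ} (h : |θ| ≤ 1) (hy : 0 ≤ y * θ) :
    phiN 1 * Real.exp (-(y ^ 2) / 2) ≤ phiN (y - θ) := by
  unfold phiN
  rw [mul_assoc, ← Real.exp_add]
  have : θ ^ 2 ≤ 1 := by rwa [sq_le_one_iff_abs_le_one]
  gcongr
  nlinarith

lemma marg_ge {τ y : ℝ} (hτ : 0 < τ) (hτ1 : τ ≤ 1) (hi : Integrable (postDens τ y)) :
    cLow * phiN 1 * Real.exp (-(y ^ 2) / 2) ≤ margDens τ y := by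
  have key : ∀ S : Set ℝ, MeasurableSet S → volume S = ENNReal.ofReal τ →
      (∀ θ ∈ S, θ ≠ 0 ∧ |θ| ≤ τ ∧ 0 ≤ y * θ) →
      cLow * phiN 1 * Real.exp (-(y ^ 2) / 2) ≤ margDens τ y := by
    intro S hS hv hb
    calc cLow * phiN 1 * Real.exp (-(y ^ 2) / 2)
        = ∫ θ in S, (phiN 1 * Real.exp (-(y ^ 2) / 2)) * (cLow / τ) := by
          rw [setIntegral_const, measureReal_def, hv, ENNReal.toReal_ofReal hτ.le, smul_eq_mul]
          field_simp
      _ ≤ ∫ θ in S, postDens τ y θ := by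
          refine setIntegral_mono_on (integrableOn_const (by simp [hv])) hi.integrableOn hS ?_
          intro θ hθ
          obtain ⟨h0, h1, h2⟩ := hb θ hθ
          have := cLow_pos
          exact mul_le_mul (phiN_ge (h1.trans hτ1) h2) (gHS_ge hτ h0 h1) (by positivity)
            (phiN_nonneg _)
      _ ≤ _ := setIntegral_le_integral hi (ae_of_all _ fun θ => postDens_nonneg y θ hτ)
  rcases le_total 0 y with hy | hy
  · refine key (Ioo 0 τ) measurableSet_Ioo (by simp) fun θ hθ => ⟨hθ.1.ne', ?_, ?_⟩
    · rw [abs_of_pos hθ.1]; exact hθ.2.le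
    · exact mul_nonneg hy hθ.1.le
  · refine key (Ioo (-τ) 0) measurableSet_Ioo (by simp) fun θ hθ => ⟨hθ.2.ne, ?_, ?_⟩
    · rw [abs_of_neg hθ.2]; linarith [hθ.1]
    · exact mul_nonneg_of_nonpos_of_nonpos hy hθ.2.le

lemma tail_le {τ y t : ℝ} (hτ : 0 < τ) (ht : 0 < t) (hi : Integrable (postDens τ y)) :
    ∫ θ in {x | t < |x|}, postDens τ y θ ≤ 8 * τ / t := by
  have hI : IntegrableOn (fun θ : ℝ => 4 * τ * θ ^ (-2 : ℝ)) (Ioi t) :=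
    (integrableOn_Ioi_rpow_of_lt (by norm_num) ht).const_mul _
  have hv : ∫ θ in Ioi t, 4 * τ * θ ^ (-2 : ℝ) = 4 * τ / t := by
    rw [integral_const_mul, integral_Ioi_rpow_of_lt (by norm_num) ht]
    norm_num
    rw [Real.rpow_neg_one]; rfl
  have hb : ∀ z : ℝ, ∀ θ ∈ Ioi t, phiN z * gHS τ θ ≤ 4 * τ * θ ^ (-2 : ℝ) := by
    intro z θ hθ
    have h0 : 0 < θ := ht.trans hθ
    have := gHS_le hτ h0.ne'
    have e : θ ^ (-2 : ℝ) = (θ ^ 2)⁻¹ := by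
      rw [Real.rpow_neg h0.le]; norm_num
    rw [e, ← div_eq_mul_inv]
    calc _ ≤ 1 * gHS τ θ := by
          have := gHS_nonneg θ hτ
          gcongr
          exact phiN_le_one z
      _ ≤ _ := by rwa [one_mul]
  have hs : {x : ℝ | t < |x|} = Ioi t ∪ Iio (-t) := by
    ext x; simp [lt_abs, lt_neg]
  rw [hs, setIntegral_union _ measurableSet_Iio hi.integrableOn hi.integrableOn]
  · have h1 : ∫ θ in Ioi t, postDens τ y θ ≤ 4 * τ / t := by
      rw [← hv]
      exact setIntegral_mono_on hi.integrableOn hI measurableSet_Ioi fun θ hθ => hb _ θ hθ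
    have h2 : ∫ θ in Iio (-t), postDens τ y θ ≤ 4 * τ / t := by
      rw [← integral_Iic_eq_integral_Iio, ← integral_comp_neg_Ioi, ← hv]
      refine setIntegral_mono_on ?_ hI measurableSet_Ioi fun θ hθ => ?_
      · exact hi.comp_neg.integrableOn
      · unfold postDens
        rw [gHS_neg]
        exact hb _ θ hθ
    calc _ ≤ 4 * τ / t + 4 * τ / t := add_le_add h1 h2
      _ = _ := by ring
  · rw [Set.disjoint_left]
    intro x hx hx'
    simp only [mem_Ioi, mem_Iio] at hx hx'
    linarith

lemma phiN_eq_pdf (y θ : ℝ) : phiN (y - θ) = gaussianPDFReal y 1 θ := by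
  unfold phiN gaussianPDFReal
  simp only [NNReal.coe_one, mul_one]
  congr 3
  ring

lemma phiN_lip (a b : ℝ) : |phiN a - phiN b| ≤ |a - b| := by
  have hd : ∀ x : ℝ, HasDerivAt phiN
      ((Real.sqrt (2 * Real.pi))⁻¹ * (Real.exp (-(x ^ 2) / 2) * (-(2 * x) / 2))) x := by
    intro x
    have := (((hasDerivAt_pow 2 x).neg.div_const 2).exp).const_mul (Real.sqrt (2 * Real.pi))⁻¹
    refine HasDerivAt.congr_deriv this ?_
    simp
  have h := Convex.norm_image_sub_le_of_norm_hasDerivWithin_le (f := phiN) (C := 1) (s := univ)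
    (x := b) (y := a) (fun x _ => (hd x).hasDerivWithinAt) ?_ convex_univ (mem_univ _) (mem_univ _)
  · simpa [Real.norm_eq_abs] using h
  · intro x _
    rw [Real.norm_eq_abs, abs_mul, abs_mul, Real.abs_exp, abs_of_nonneg (by positivity)]
    have h1 : |(-(2 * x) / 2)| ≤ Real.exp (x ^ 2 / 2) := by
      have := Real.add_one_le_exp (x ^ 2 / 2)
      have e : |(-(2 * x) / 2)| = |x| := by rw [show -(2 * x) / 2 = -x by ring, abs_neg]
      rw [e]
      nlinarith [sq_abs x, sq_nonneg (|x| - 1)]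
    calc _ ≤ 1 * (Real.exp (-(x ^ 2) / 2) * Real.exp (x ^ 2 / 2)) := by
          gcongr
          exact sqrt2pi_inv_le
      _ = 1 := by rw [← Real.exp_add, one_mul, neg_div, neg_add_cancel, Real.exp_zero]

lemma mean_le {τ y : ℝ} (hτ : 0 < τ) :
    |∫ θ, θ * postDens τ y θ| ≤ 12 * τ := by
  by_cases hi : Integrable (fun θ => θ * postDens τ y θ)
  swap
  · rw [integral_undef hi]; simp; positivity
  set h : ℝ → ℝ := fun θ => θ * postDens τ y θ with hh
  have e1 : ∫ θ, h (-θ) = ∫ θ, h θ := integral_neg_eq_self h volume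
  have e2 : 2 * ∫ θ, h θ = ∫ θ, (h θ + h (-θ)) := by
    rw [integral_add hi hi.comp_neg, e1]; ring
  let B : ℝ → ℝ := fun θ => 4 * τ * ((Icc (-1 : ℝ) 1).indicator (fun _ => (2 : ℝ)) θ +
    (gaussianPDFReal y 1 θ + gaussianPDFReal (-y) 1 θ))
  have hBi1 : Integrable ((Icc (-1 : ℝ) 1).indicator (fun _ => (2 : ℝ))) :=
    (integrable_indicator_iff measurableSet_Icc).2 (integrableOn_const (by simp))
  have hBi2 := integrable_gaussianPDFReal y 1
  have hBi3 := integrable_gaussianPDFReal (-y) 1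
  have hBi : Integrable B := (hBi1.add (hBi2.add hBi3)).const_mul _
  have hBv : ∫ θ, B θ = 24 * τ := by
    simp only [B]
    rw [integral_const_mul, integral_add hBi1 (by exact hBi2.add hBi3), integral_add hBi2 hBi3,
      integral_gaussianPDFReal_eq_one _ one_ne_zero, integral_gaussianPDFReal_eq_one _ one_ne_zero,
      integral_indicator measurableSet_Icc]
    simp
    ring
  have hB : ∀ θ, |h θ + h (-θ)| ≤ B θ := by
    intro θ
    have q1 := gaussianPDFReal_nonneg y 1 θ
    have q2 := gaussianPDFReal_nonneg (-y) 1 θ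
    by_cases h0 : θ = 0
    · subst h0
      simp only [hh, B, zero_mul, neg_zero, add_zero, abs_zero]
      have : (0 : ℝ) ≤ (Icc (-1 : ℝ) 1).indicator (fun _ => (2 : ℝ)) 0 :=
        indicator_nonneg (fun _ _ => by norm_num) _
      positivity
    have e3 : h θ + h (-θ) = θ * gHS τ θ * (phiN (y - θ) - phiN (-y - θ)) := by
      simp only [hh, postDens, gHS_neg]
      rw [show -y - θ = -(y - -θ) by ring, phiN_neg]
      ring
    have hg := gHS_le hτ h0
    have hg0 := gHS_nonneg θ hτ
    have ha : 0 < |θ| := abs_pos.2 h0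
    have e4 : |θ| * (4 * τ / θ ^ 2) = 4 * τ / |θ| := by
      rw [← sq_abs θ]; field_simp
    rw [e3, abs_mul, abs_mul, abs_of_nonneg hg0]
    have h5 : |θ| * gHS τ θ ≤ 4 * τ / |θ| := by
      rw [← e4]; gcongr
    have h6 : |phiN (y - θ) - phiN (-y - θ)| ≤ |θ| *
        ((Icc (-1 : ℝ) 1).indicator (fun _ => (2 : ℝ)) θ +
        (gaussianPDFReal y 1 θ + gaussianPDFReal (-y) 1 θ)) := by
      by_cases h1 : |θ| ≤ 1
      · rw [indicator_of_mem (by rw [mem_Icc]; exact abs_le.1 h1)]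
        have := phiN_lip (y - θ) (y + θ)
        rw [show -y - θ = -(y + θ) by ring, phiN_neg]
        have e : |y - θ - (y + θ)| = 2 * |θ| := by
          rw [show y - θ - (y + θ) = -(2 * θ) by ring, abs_neg, abs_mul]; norm_num
        rw [e] at this
        nlinarith [mul_nonneg ha.le q1, mul_nonneg ha.le q2]
      · rw [indicator_of_notMem (by rw [mem_Icc]; exact fun h => h1 (abs_le.2 h)), zero_add]
        rw [phiN_eq_pdf, phiN_eq_pdf]
        have h7 : |gaussianPDFReal y 1 θ - gaussianPDFReal (-y) 1 θ| ≤
            gaussianPDFReal y 1 θ + gaussianPDFReal (-y) 1 θ := by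
          rw [abs_le]; constructor <;> linarith
        push Not at h1
        nlinarith
    calc _ ≤ 4 * τ / |θ| * (|θ| * ((Icc (-1 : ℝ) 1).indicator (fun _ => (2 : ℝ)) θ +
        (gaussianPDFReal y 1 θ + gaussianPDFReal (-y) 1 θ))) := by
          gcongr
      _ = B θ := by simp only [B]; field_simp
  have h8 : |∫ θ, (h θ + h (-θ))| ≤ ∫ θ, B θ := by
    exact norm_integral_le_of_norm_le (f := fun θ => h θ + h (-θ)) hBi (ae_of_all volume hB)
  rw [← e2, hBv, abs_mul] at h8
  norm_num at h8
  linarith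

/-- key deterministic non-coverage criterion -/
lemma noncover {τ y A α L r x : ℝ} (hτ : 0 < τ) (hτ1 : τ ≤ 1) (hα : 0 < α) (hα' : α ≤ 1 / 2)
    (hL : 0 < L) (hx : |x| = A) (hA : 0 < A)
    (hr : postProb τ y {x | |x - postMean τ y| ≤ r} = 1 - α)
    (hsmall : τ * Real.exp (y ^ 2 / 2) < cLow * phiN 1 * α / (48 * (L + 1)) * A) :
    ¬ |x - postMean τ y| ≤ L * r := by
  have hm0 : margDens τ y ≠ 0 := by
    intro h
    rw [postProb, h, div_zero] at hr
    linarith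
  have hi : Integrable (postDens τ y) := by
    by_contra h
    exact hm0 (integral_undef h)
  have hc := cLow_pos
  have hp : 0 < phiN 1 := by unfold phiN; positivity
  have hm := marg_ge hτ hτ1 hi
  have hmpos : 0 < margDens τ y := lt_of_lt_of_le (by positivity) hm
  have hexp : Real.exp (y ^ 2 / 2) * Real.exp (-(y ^ 2) / 2) = 1 := by
    rw [← Real.exp_add, neg_div, add_neg_cancel, Real.exp_zero]
  -- τ < α A m / (48 (L+1))
  have h1 : τ < α * A / (48 * (L + 1)) * margDens τ y := by
    calc τ = τ * Real.exp (y ^ 2 / 2) * Real.exp (-(y ^ 2) / 2) := by rw [mul_assoc, hexp, mul_one]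
      _ < cLow * phiN 1 * α / (48 * (L + 1)) * A * Real.exp (-(y ^ 2) / 2) := by gcongr
      _ = α * A / (48 * (L + 1)) * (cLow * phiN 1 * Real.exp (-(y ^ 2) / 2)) := by ring
      _ ≤ _ := by gcongr
  set c : ℝ := A / (4 * (L + 1)) with hcdef
  have hc0 : 0 < c := by positivity
  have h1' : 12 * τ < α * c * margDens τ y := by
    have : α * c * margDens τ y = 12 * (α * A / (48 * (L + 1)) * margDens τ y) := by
      rw [hcdef]; field_simp; norm_num
    rw [this]; linarith
  have hmean : |postMean τ y| ≤ c := by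
    rw [postMean, abs_div, abs_of_pos hmpos, div_le_iff₀ hmpos]
    refine (mean_le hτ).trans (h1'.le.trans ?_)
    have : 0 < c * margDens τ y := by positivity
    nlinarith
  have htail : ∫ θ in {x | c < |x|}, postDens τ y θ < α * margDens τ y := by
    refine (tail_le hτ hc0 hi).trans_lt ?_
    rw [div_lt_iff₀ hc0]
    nlinarith
  have hrle : r ≤ 2 * c := by
    by_contra hcon
    push Not at hcon
    have hsub : {x : ℝ | c < |x|}ᶜ ⊆ {x | |x - postMean τ y| ≤ r} := by
      intro z hz
      simp only [mem_compl_iff, mem_ofPred_eq, not_lt] at hz ⊢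
      calc |z - postMean τ y| ≤ |z| + |postMean τ y| := abs_sub _ _
        _ ≤ r := by linarith
    have hms : MeasurableSet {x : ℝ | c < |x|} := measurableSet_lt measurable_const (by fun_prop)
    have h2 : ∫ θ in {x : ℝ | c < |x|}ᶜ, postDens τ y θ ≤
        ∫ θ in {x | |x - postMean τ y| ≤ r}, postDens τ y θ :=
      setIntegral_mono_set hi.integrableOn
        (ae_of_all _ fun θ => postDens_nonneg y θ hτ) hsub.eventuallyLE
    have h3 := integral_add_compl hms hi
    have h4 : ∫ θ in {x | |x - postMean τ y| ≤ r}, postDens τ y θ = (1 - α) * margDens τ y := by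
      rw [← hr, postProb]; field_simp
    have h5 : ∫ θ, postDens τ y θ = margDens τ y := rfl
    rw [h5] at h3
    nlinarith
  push Not
  have h6 : A ≤ |x - postMean τ y| + |postMean τ y| := by
    rw [← hx]
    calc |x| = |(x - postMean τ y) + postMean τ y| := by ring_nf
      _ ≤ _ := abs_add_le _ _
  have h7 : A = 4 * (L + 1) * c := by rw [hcdef]; field_simp
  nlinarith

/-- Growth condition. -/
lemma growth {kM : ℝ} (hkM : kM < 1) {τ f : ℕ → ℝ} (hτpos : ∀ n, 0 < τ n)
    (hτ : Tendsto τ atTop (nhds 0)) (hf : Tendsto f atTop atTop) (D K : ℝ) (hD : 0 < D)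
    (hK : 0 ≤ K) :
    ∀ᶠ n in atTop, ∀ x y : ℝ, f n * τ n ≤ |x| → |x| ≤ kM * zet (τ n) → |y - x| ≤ K →
      τ n * Real.exp (y ^ 2 / 2) < D * |x| := by
  have hlog : Tendsto (fun n => Real.log (1 / τ n)) atTop atTop := by
    have h0 : Tendsto τ atTop (nhdsWithin 0 (Ioi 0)) :=
      tendsto_nhdsWithin_iff.2 ⟨hτ, Eventually.of_forall hτpos⟩
    have : Tendsto (fun n => (τ n)⁻¹) atTop atTop := tendsto_inv_nhdsGT_zero.comp h0
    simp only [one_div]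
    exact Real.tendsto_log_atTop.comp this
  have hz : Tendsto (fun n => zet (τ n)) atTop atTop := by
    unfold zet
    exact Real.tendsto_sqrt_atTop.comp (hlog.const_mul_atTop (by norm_num))
  have hk : 0 < 1 - kM := by linarith
  have hz1 := hz.eventually_ge_atTop (max 1 (2 * K / (1 - kM)))
  have hsq : Tendsto (fun n => (1 - kM) / 2 * zet (τ n)) atTop atTop :=
    hz.const_mul_atTop (by positivity)
  have hz2 := hsq.eventually_gt_atTop (2 * (|Real.log D| + 1))
  filter_upwards [hlog.eventually_ge_atTop 1, hf.eventually_gt_atTop (Real.exp ((1 + K) ^ 2 / 2) / D),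
    hz1, hz2] with n hl hfn hzn hzn2 x y hx1 hx2 hy
  have hτn := hτpos n
  have hyabs : |y| ≤ |x| + K := by
    calc |y| = |(y - x) + x| := by ring_nf
      _ ≤ |y - x| + |x| := abs_add_le _ _
      _ ≤ _ := by linarith
  rcases le_total |x| 1 with h1 | h1
  · have h2 : y ^ 2 ≤ (1 + K) ^ 2 := by
      rw [← sq_abs y]; gcongr; linarith
    calc τ n * Real.exp (y ^ 2 / 2) ≤ τ n * Real.exp ((1 + K) ^ 2 / 2) := by gcongr
      _ < τ n * (D * f n) := by
          rw [div_lt_iff₀ hD] at hfn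
          gcongr; linarith
      _ = D * (f n * τ n) := by ring
      _ ≤ _ := by gcongr
  · have hz0 : 1 ≤ zet (τ n) := (le_max_left _ _).trans hzn
    have hKz : 2 * K ≤ (1 - kM) * zet (τ n) := by
      have := (le_max_right _ _).trans hzn
      rw [div_le_iff₀ hk] at this; linarith
    have hy2 : |y| ≤ (1 + kM) / 2 * zet (τ n) := by nlinarith
    have hzsq : zet (τ n) ^ 2 = 2 * Real.log (1 / τ n) := by
      unfold zet; rw [Real.sq_sqrt (by linarith)]
    have hτe : τ n = Real.exp (-(zet (τ n) ^ 2) / 2) := by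
      rw [hzsq, one_div, Real.log_inv]
      rw [show -(2 * -Real.log (τ n)) / 2 = Real.log (τ n) by ring, Real.exp_log hτn]
    have hkM0 : 0 < kM := by
      by_contra hcon
      push Not at hcon
      nlinarith
    set z := zet (τ n) with hzdef
    have hysq : y ^ 2 ≤ ((1 + kM) / 2 * z) ^ 2 := by
      rw [← sq_abs y]; gcongr
    have hlt : -(z ^ 2) / 2 + y ^ 2 / 2 < Real.log D := by
      have h3 : ((1 + kM) / 2 * z) ^ 2 ≤ (1 + kM) / 2 * z ^ 2 := by
        have : 0 ≤ (1 + kM) / 2 * (1 - (1 + kM) / 2) * z ^ 2 := by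
          have : 0 ≤ 1 - (1 + kM) / 2 := by linarith
          positivity
        nlinarith
      have h4 : (1 - kM) / 2 * z ≤ (1 - kM) / 2 * z ^ 2 := by
        gcongr; nlinarith
      have h5 := neg_abs_le (Real.log D)
      nlinarith
    calc τ n * Real.exp (y ^ 2 / 2) = Real.exp (-(z ^ 2) / 2 + y ^ 2 / 2) := by
          rw [Real.exp_add, ← hτe]
      _ < D := by rwa [← Real.lt_log_iff_exp_lt hD]
      _ ≤ D * |x| := le_mul_of_one_le_right hD.le h1

lemma gauss_mass (ε : ℝ≥0∞) (hε : ε < 1) :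
    ∃ K : ℝ, 0 ≤ K ∧ ε < (gaussianReal 0 1) {x | |x| ≤ K} := by
  have hmono : Monotone (fun k : ℕ => {x : ℝ | |x| ≤ (k : ℝ)}) := by
    intro a b hab x hx
    exact le_trans (show |x| ≤ (a : ℝ) from hx) (by exact_mod_cast hab)
  have ht := tendsto_measure_iUnion_atTop (μ := gaussianReal 0 1) hmono
  have hu : (⋃ k : ℕ, {x : ℝ | |x| ≤ (k : ℝ)}) = univ := by
    ext x
    simpa using exists_nat_ge |x|
  rw [hu, measure_univ] at ht
  obtain ⟨k, hk⟩ := (ht.eventually_const_lt hε).exists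
  exact ⟨k, by positivity, hk⟩

lemma Pdata_coord {n : ℕ} (θ₀ : Fin n → ℝ) (i : Fin n) (K : ℝ) :
    Pdata θ₀ {y | |y i - θ₀ i| ≤ K} = (gaussianReal 0 1) {x | |x| ≤ K} := by
  have h1 := measurePreserving_eval (fun i => gaussianReal (θ₀ i) 1) i
  have hm : MeasurableSet {x : ℝ | |x| ≤ K} := measurableSet_le (by fun_prop) measurable_const
  have h2 : (gaussianReal (θ₀ i) 1).map (fun x => x - θ₀ i) = gaussianReal 0 1 := by
    rw [gaussianReal_map_sub_const, sub_self]
  have hm2 : MeasurableSet ((fun x : ℝ => x - θ₀ i) ⁻¹' {x : ℝ | |x| ≤ K}) :=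
    (by fun_prop : Measurable (fun x : ℝ => x - θ₀ i)) hm
  rw [← h2, Measure.map_apply (by fun_prop) hm, ← h1.measure_preimage hm2.nullMeasurableSet]
  rfl

theorem stmt_1
    (α : ℝ) (hα : 0 < α) (hα' : α ≤ 1 / 2)
    (kM : ℝ) (hkM : kM < 1)
    (τ : ℕ → ℝ) (hτpos : ∀ n, 0 < τ n) (hτ : Tendsto τ atTop (nhds 0))
    (f : ℕ → ℝ) (hf : Tendsto f atTop atTop)
    (θ₀ : (n : ℕ) → Fin (n + 1) → ℝ)
    (rhat : (n : ℕ) → ℝ → ℝ)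
    (hrhat : ∀ n y, postProb (τ n) y {x | |x - postMean (τ n) y| ≤ rhat n y} = 1 - α)
    (L : ℝ) (hL : 0 < L)
    (i : (n : ℕ) → Fin (n + 1))
    (hiM : ∀ n, f n * τ n ≤ |θ₀ n (i n)| ∧ |θ₀ n (i n)| ≤ kM * zet (τ n)) :
    Tendsto
      (fun n =>
        Pdata (θ₀ n)
          {y : Fin (n + 1) → ℝ |
            ¬ |θ₀ n (i n) - postMean (τ n) (y (i n))| ≤ L * rhat n (y (i n))})
      atTop (nhds 1) := by
  have : ∀ n, IsProbabilityMeasure (Pdata (θ₀ n)) := fun n => by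
    unfold Pdata; infer_instance
  have hp : 0 < phiN 1 := by unfold phiN; positivity
  have hc := cLow_pos
  refine tendsto_order.2 ⟨fun ε hε => ?_, fun b hb =>
    Eventually.of_forall fun n => lt_of_le_of_lt prob_le_one hb⟩
  obtain ⟨K, hK, hKε⟩ := gauss_mass ε hε
  filter_upwards [growth hkM hτpos hτ hf (cLow * phiN 1 * α / (48 * (L + 1))) K (by positivity) hK,
    hτ.eventually_le_const one_pos, hf.eventually_gt_atTop 0] with n hn hτ1 hfn
  refine hKε.trans_le ?_
  rw [← Pdata_coord (θ₀ n) (i n) K]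
  refine measure_mono fun y hy => ?_
  obtain ⟨h1, h2⟩ := hiM n
  exact noncover (hτpos n) hτ1 hα hα' hL rfl
    (lt_of_lt_of_le (mul_pos hfn (hτpos n)) h1) (hrhat n _) (hn _ _ h1 h2 hy)

end
end

section
/- Consider the thresholding model selection method with deterministic τ = τ_n → 0: coordinate i is selected as a signal if and only if κ_i(τ) = θ̂_i(τ)/Y_i > 1/2. Suppose k_S > 0, k_M < 1, k_L > 1, f_τ ↑ ∞ as τ → 0, and let γ_n → c with 0 ≤ c ≤ 1/2 and ζ_{γ_n} = o(ζ_τ). Then with probability tending to one at least a fraction 1 − 2γ_n of the coordinates with θ_{0,i} = 0 are not selected; with probability tending to one at least a fraction 1 − γ_n of the signals in L = {i : |θ_{0,i}| ≥ k_L ζ_τ} are selected; and every nonzero signal θ_{0,i} in S ∪ M, where S = {i : |θ_{0,i}| ≤ k_S τ} and M = {i : f_τ τ ≤ |θ_{0,i}| ≤ k_M ζ_τ}, is not selected with probability tending to one. -/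
open MeasureTheory ProbabilityTheory Filter Set Real Asymptotics
open scoped ENNReal NNReal BigOperators

noncomputable section

lemma hs_tail (m t : ℝ) (ht : 0 ≤ t) :
    gaussianReal m 1 {x | t < |x - m|} ≤ ENNReal.ofReal (2 * Real.exp (-(t ^ 2) / 2)) := by
  have h1 := measure_ge_le_exp_mul_mgf (μ := gaussianReal m 1) (X := id) (t := t) (m + t) ht
    (integrable_exp_mul_gaussianReal t)
  have h2 := measure_le_le_exp_mul_mgf (μ := gaussianReal m 1) (X := id) (t := -t) (m - t)
    (by linarith) (integrable_exp_mul_gaussianReal (-t))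
  rw [mgf_id_gaussianReal] at h1 h2
  rw [← Real.exp_add] at h1 h2
  have e1 : -t * (m + t) + (m * t + ((1 : ℝ≥0) : ℝ) * t ^ 2 / 2) = -(t ^ 2) / 2 := by
    push_cast; ring
  have e2 : - -t * (m - t) + (m * -t + ((1 : ℝ≥0) : ℝ) * (-t) ^ 2 / 2) = -(t ^ 2) / 2 := by
    push_cast; ring
  rw [e1] at h1
  rw [e2] at h2
  have hsub : {x : ℝ | t < |x - m|} ⊆ {x | m + t ≤ id x} ∪ {x | id x ≤ m - t} := by
    intro x hx
    simp only [Set.mem_ofPred_eq, lt_abs] at hx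
    rcases hx with h | h
    · left; simp only [Set.mem_ofPred_eq, id]; linarith
    · right; simp only [Set.mem_ofPred_eq, id]; linarith
  have h3 : (gaussianReal m 1).real {x | t < |x - m|} ≤ 2 * Real.exp (-(t ^ 2) / 2) := by
    refine (measureReal_mono hsub).trans ((measureReal_union_le _ _).trans ?_)
    linarith
  rw [← ENNReal.ofReal_toReal (measure_ne_top (gaussianReal m 1) _)]
  exact ENNReal.ofReal_le_ofReal h3

lemma hs_frac {n : ℕ} (θ : Fin n → ℝ) (J : Set (Fin n)) (t a : ℝ) (ht : 0 ≤ t) (ha : 0 < a)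
    (G : ℝ → Prop) (hG : ∀ i ∈ J, ∀ x, |x - θ i| ≤ t → G x) :
    1 - ENNReal.ofReal (2 * Real.exp (-(t ^ 2) / 2) / a) ≤
      Pdata θ {y : Fin n → ℝ | (1 - a) * (J.ncard : ℝ) ≤
        (({i | i ∈ J ∧ G (y i)} : Set (Fin n)).ncard : ℝ)} := by
  classical
  have : IsProbabilityMeasure (Pdata θ) := by unfold Pdata; infer_instance
  set p := 2 * Real.exp (-(t ^ 2) / 2) with hp
  have hppos : 0 < p := by positivity
  let F : (Fin n → ℝ) → ℝ≥0∞ := fun y =>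
    ∑ i ∈ J.toFinset, ({x : ℝ | t < |x - θ i|}.indicator (fun _ => (1 : ℝ≥0∞)) (y i))
  have hmeas : ∀ i, MeasurableSet {x : ℝ | t < |x - θ i|} := fun i =>
    measurableSet_lt measurable_const (by fun_prop)
  have hF : Measurable F := by
    refine Finset.measurable_sum _ fun i _ => ?_
    exact (measurable_const.indicator (hmeas i)).comp (measurable_pi_apply i)
  have hFint : ∫⁻ y, F y ∂(Pdata θ) ≤ (J.toFinset.card : ℝ≥0∞) * ENNReal.ofReal p := by
    simp only [F]
    rw [lintegral_finsetSum' _ (fun i _ => by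
      exact ((measurable_const.indicator (hmeas i)).comp (measurable_pi_apply i)).aemeasurable)]
    rw [← nsmul_eq_mul]
    refine Finset.sum_le_card_nsmul _ _ _ fun i _ => ?_
    have hmp : MeasurePreserving (Function.eval i) (Pdata θ) (gaussianReal (θ i) 1) :=
      measurePreserving_eval (fun i => gaussianReal (θ i) 1) i
    have := hmp.lintegral_comp (measurable_const.indicator (hmeas i) :
      Measurable ({x : ℝ | t < |x - θ i|}.indicator (fun _ => (1 : ℝ≥0∞))))
    refine (le_of_eq this).trans ?_
    rw [lintegral_indicator_const (hmeas i), one_mul]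
    exact hs_tail _ _ ht
  set E := {y : Fin n → ℝ | (1 - a) * (J.ncard : ℝ) ≤
        (({i | i ∈ J ∧ G (y i)} : Set (Fin n)).ncard : ℝ)} with hE
  set bad := {y : Fin n → ℝ | ENNReal.ofReal (a * J.ncard) < F y} with hbad
  have hbadm : MeasurableSet bad := measurableSet_lt measurable_const hF
  have hsub : badᶜ ⊆ E := by
    intro y hy
    simp only [hbad, Set.mem_compl_iff, Set.mem_ofPred_eq, not_lt] at hy
    have hFy : F y = ((J.toFinset.filter fun i => t < |y i - θ i|).card : ℝ≥0∞) := by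
      simp only [F, Set.indicator_apply, Set.mem_ofPred_eq]
      rw [Finset.sum_boole]
    rw [hFy] at hy
    have h1 : ((J.toFinset.filter fun i => t < |y i - θ i|).card : ℝ) ≤ a * J.ncard := by
      rw [← ENNReal.ofReal_natCast] at hy
      exact (ENNReal.ofReal_le_ofReal_iff (by positivity)).1 hy
    have h2 : (J.toFinset.filter fun i => ¬ t < |y i - θ i|).card ≤
        ({i | i ∈ J ∧ G (y i)} : Set (Fin n)).ncard := by
      rw [← Set.ncard_coe_finset]
      refine Set.ncard_le_ncard ?_ (Set.toFinite _)
      intro i hi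
      simp only [Finset.coe_filter, Set.mem_toFinset, Set.mem_ofPred_eq, not_lt] at hi
      exact ⟨hi.1, hG i hi.1 _ hi.2⟩
    have h3 := Finset.card_filter_add_card_filter_not (s := J.toFinset) (fun i => t < |y i - θ i|)
    rw [← Set.ncard_eq_toFinset_card' J] at h3
    have h3' : ((J.toFinset.filter fun i => t < |y i - θ i|).card : ℝ) +
      ((J.toFinset.filter fun i => ¬ t < |y i - θ i|).card : ℝ) = J.ncard := by exact_mod_cast h3
    have h2' : ((J.toFinset.filter fun i => ¬ t < |y i - θ i|).card : ℝ) ≤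
        (({i | i ∈ J ∧ G (y i)} : Set (Fin n)).ncard : ℝ) := by exact_mod_cast h2
    simp only [hE, Set.mem_ofPred_eq]
    linarith
  have hbadle : Pdata θ bad ≤ ENNReal.ofReal (p / a) := by
    rcases Nat.eq_zero_or_pos J.ncard with h0 | h0
    · have : bad = ∅ := by
        ext y
        have hJ : J = ∅ := (Set.ncard_eq_zero (Set.toFinite _)).1 h0
        subst hJ
        simp [hbad, F]
      rw [this]; simp
    · have h0' : (0 : ℝ) < J.ncard := by exact_mod_cast h0
      have hm := mul_meas_ge_le_lintegral (μ := Pdata θ) hF (ENNReal.ofReal (a * J.ncard))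
      have hm2 : ENNReal.ofReal (a * J.ncard) * Pdata θ bad ≤
          (J.toFinset.card : ℝ≥0∞) * ENNReal.ofReal p := by
        refine le_trans ?_ (hm.trans hFint)
        gcongr
        intro y hy
        exact le_of_lt (show ENNReal.ofReal (a * J.ncard) < F y from hy)
      rw [← Set.ncard_eq_toFinset_card' J, ← ENNReal.ofReal_natCast,
        ← ENNReal.ofReal_mul (by positivity), mul_comm,
        ← ENNReal.le_div_iff_mul_le (Or.inl (by simpa using by positivity)) (Or.inl (by simp)),
        ← ENNReal.ofReal_div_of_pos (by positivity)] at hm2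
      refine hm2.trans (le_of_eq ?_)
      congr 1
      field_simp
  calc 1 - ENNReal.ofReal (p / a) ≤ 1 - Pdata θ bad := by gcongr
    _ = Pdata θ badᶜ := (prob_compl_eq_one_sub hbadm).symm
    _ ≤ Pdata θ E := measure_mono hsub

/-- half-Cauchy density. -/
def hsW (l : ℝ) : ℝ := 2 / (Real.pi * (1 + l ^ 2))

/-- integrand of the (rescaled) marginal density. -/
def hsH (τ y l : ℝ) : ℝ :=
  hsW l * ((Real.sqrt (1 + (l * τ) ^ 2))⁻¹ *
    Real.exp (y ^ 2 / 2 * ((l * τ) ^ 2 / (1 + (l * τ) ^ 2))))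

/-- integrand deciding the sign of `κ - 1/2`. -/
def hsF (τ y l : ℝ) : ℝ := (((l * τ) ^ 2 - 1) / ((l * τ) ^ 2 + 1)) * hsH τ y l

lemma hsW_pos (l : ℝ) : 0 < hsW l := by unfold hsW; positivity

lemma hsH_pos (τ y l : ℝ) : 0 < hsH τ y l := by
  unfold hsH
  have := hsW_pos l
  positivity

lemma hsW_eq (l : ℝ) : hsW l = (2 / Real.pi) * (1 + l ^ 2)⁻¹ := by
  unfold hsW; field_simp

lemma hsW_integrable : Integrable hsW := by
  have : hsW = fun l => (2 / Real.pi) * (1 + l ^ 2)⁻¹ := funext hsW_eq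
  rw [this]
  exact integrable_inv_one_add_sq.const_mul _

lemma hsW_measurable : Measurable hsW := by unfold hsW; fun_prop

lemma hsW_integral : ∫ l in Set.Ioi (0 : ℝ), hsW l = 1 := by
  simp_rw [hsW_eq]
  rw [integral_const_mul, integral_Ioi_inv_one_add_sq]
  simp

lemma hsW_integral_Ioi (a : ℝ) (ha : 0 < a) : ∫ l in Set.Ioi a, hsW l ≤ 1 / a := by
  simp_rw [hsW_eq]
  rw [integral_const_mul, integral_Ioi_inv_one_add_sq]
  have h1 : Real.arctan a + Real.arctan a⁻¹ = Real.pi / 2 := by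
    rw [Real.arctan_inv_of_pos ha]; ring
  have h2 : Real.arctan a⁻¹ ≤ a⁻¹ := by
    have h0 : 0 < Real.arctan a⁻¹ := Real.arctan_pos.2 (by positivity)
    have := Real.lt_tan h0 (Real.arctan_lt_pi_div_two _)
    rw [Real.tan_arctan] at this
    exact this.le
  have h3 : Real.pi / 2 - Real.arctan a ≤ 1 / a := by rw [one_div]; linarith
  have h4 : 2 / Real.pi ≤ 1 := by
    rw [div_le_one Real.pi_pos]; linarith [Real.pi_gt_three]
  have h5 : 0 ≤ Real.pi / 2 - Real.arctan a := by linarith [Real.arctan_lt_pi_div_two a]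
  have : 0 < 1 / a := by positivity
  calc 2 / Real.pi * (Real.pi / 2 - Real.arctan a) ≤ 1 * (Real.pi / 2 - Real.arctan a) := by gcongr
    _ ≤ 1 / a := by linarith

lemma hsH_measurable (τ y : ℝ) : Measurable (hsH τ y) := by
  unfold hsH
  have := hsW_measurable
  fun_prop

lemma hs_ratio (s : ℝ) : 0 ≤ s ^ 2 / (1 + s ^ 2) ∧ s ^ 2 / (1 + s ^ 2) ≤ 1 :=
  ⟨by positivity, by rw [div_le_one (by positivity)]; linarith⟩

lemma hsH_le (τ y l : ℝ) :
    hsH τ y l ≤ hsW l * Real.exp (y ^ 2 / 2 * ((l * τ) ^ 2 / (1 + (l * τ) ^ 2))) := by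
  unfold hsH
  have h := hsW_pos l
  have h1 : (Real.sqrt (1 + (l * τ) ^ 2))⁻¹ ≤ 1 := by
    apply inv_le_one_of_one_le₀
    rw [Real.one_le_sqrt]
    nlinarith [sq_nonneg (l * τ)]
  have h2 := Real.exp_pos (y ^ 2 / 2 * ((l * τ) ^ 2 / (1 + (l * τ) ^ 2)))
  gcongr
  nlinarith

lemma hsH_le' (τ y l : ℝ) : hsH τ y l ≤ hsW l * Real.exp (y ^ 2 / 2) := by
  refine (hsH_le τ y l).trans ?_
  have h := hsW_pos l
  have := hs_ratio (l * τ)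
  gcongr
  have : 0 ≤ y ^ 2 / 2 := by positivity
  nlinarith

lemma hsH_integrable (τ y : ℝ) : Integrable (hsH τ y) := by
  refine (hsW_integrable.mul_const (Real.exp (y ^ 2 / 2))).mono'
    (hsH_measurable τ y).aestronglyMeasurable (ae_of_all _ fun l => ?_)
  rw [Real.norm_of_nonneg (hsH_pos _ _ _).le]
  exact hsH_le' τ y l

lemma hsrH_integrable (τ y : ℝ) :
    Integrable (fun l => ((l * τ) ^ 2 / (1 + (l * τ) ^ 2)) * hsH τ y l) := by
  refine (hsH_integrable τ y).bdd_mul (c := 1) ?_ (ae_of_all _ fun l => ?_)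
  · exact (by fun_prop : Measurable fun l : ℝ => ((l * τ) ^ 2 / (1 + (l * τ) ^ 2))).aestronglyMeasurable
  · rw [Real.norm_of_nonneg (hs_ratio _).1]
    exact (hs_ratio _).2

lemma hsF_eq (τ y l : ℝ) :
    hsF τ y l = 2 * (((l * τ) ^ 2 / (1 + (l * τ) ^ 2)) * hsH τ y l) - hsH τ y l := by
  unfold hsF
  have : (1 + (l * τ) ^ 2) ≠ 0 := by positivity
  have : ((l * τ) ^ 2 + 1) ≠ 0 := by positivity
  field_simp
  ring

lemma hsF_integrable (τ y : ℝ) : Integrable (hsF τ y) := by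
  have : hsF τ y = fun l => 2 * (((l * τ) ^ 2 / (1 + (l * τ) ^ 2)) * hsH τ y l) - hsH τ y l :=
    funext (hsF_eq τ y)
  rw [this]
  exact ((hsrH_integrable τ y).const_mul 2).sub (hsH_integrable τ y)

lemma hs_gauss (y s θ : ℝ) (hs : 0 < s) :
    phiN (y - θ) * (phiN (θ / s) / s) =
      ((Real.sqrt (2 * Real.pi))⁻¹ * Real.exp (-(y ^ 2) / 2)) *
        ((Real.sqrt (1 + s ^ 2))⁻¹ * Real.exp (y ^ 2 / 2 * (s ^ 2 / (1 + s ^ 2)))) *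
        gaussianPDFReal (s ^ 2 / (1 + s ^ 2) * y) (Real.toNNReal (s ^ 2 / (1 + s ^ 2))) θ := by
  have hd : 0 < 1 + s ^ 2 := by positivity
  rw [gaussianPDFReal_def]
  simp only [Real.coe_toNNReal _ (hs_ratio s).1]
  have h1 : Real.sqrt (2 * Real.pi * (s ^ 2 / (1 + s ^ 2))) =
      Real.sqrt (2 * Real.pi) * (s / Real.sqrt (1 + s ^ 2)) := by
    rw [Real.sqrt_mul (by positivity), Real.sqrt_div (by positivity), Real.sqrt_sq hs.le]
  rw [h1]
  unfold phiN
  have hsq : 0 < Real.sqrt (1 + s ^ 2) := by positivity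
  have hpi : 0 < Real.sqrt (2 * Real.pi) := by positivity
  have h2 : Real.exp (-(y - θ) ^ 2 / 2) * Real.exp (-(θ / s) ^ 2 / 2) =
      Real.exp (-(y ^ 2) / 2) * Real.exp (y ^ 2 / 2 * (s ^ 2 / (1 + s ^ 2))) *
        Real.exp (-(θ - s ^ 2 / (1 + s ^ 2) * y) ^ 2 / (2 * (s ^ 2 / (1 + s ^ 2)))) := by
    rw [← Real.exp_add, ← Real.exp_add, ← Real.exp_add]
    congr 1
    field_simp
    ring
  calc _ = (Real.sqrt (2 * Real.pi))⁻¹ * (Real.sqrt (2 * Real.pi))⁻¹ / s *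
        (Real.exp (-(y - θ) ^ 2 / 2) * Real.exp (-(θ / s) ^ 2 / 2)) := by ring
    _ = _ := by rw [h2]; field_simp

lemma hs_gauss_pdf (s θ : ℝ) (hs : 0 < s) :
    phiN (θ / s) / s = gaussianPDFReal 0 (Real.toNNReal (s ^ 2)) θ := by
  rw [gaussianPDFReal_def]
  simp only [Real.coe_toNNReal _ (sq_nonneg s)]
  rw [Real.sqrt_mul (by positivity), Real.sqrt_sq hs.le]
  unfold phiN
  have hpi : 0 < Real.sqrt (2 * Real.pi) := by positivity
  have : -(θ / s) ^ 2 / 2 = -(θ - 0) ^ 2 / (2 * s ^ 2) := by field_simp; ring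
  rw [this]
  field_simp

lemma phiN_measurable : Measurable phiN := by unfold phiN; fun_prop

lemma hs_prior_integrable (τ : ℝ) (hτ : 0 < τ) :
    Integrable (fun q : ℝ × ℝ => phiN (q.1 / (q.2 * τ)) / (q.2 * τ) * hsW q.2)
      ((volume : Measure ℝ).prod (volume.restrict (Set.Ioi (0 : ℝ)))) := by
  have hm : Measurable (fun q : ℝ × ℝ => phiN (q.1 / (q.2 * τ)) / (q.2 * τ) * hsW q.2) := by
    have h1 := phiN_measurable
    have h2 := hsW_measurable
    fun_prop
  rw [integrable_prod_iff' hm.aestronglyMeasurable]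
  have key : ∀ l ∈ Set.Ioi (0 : ℝ), ∀ x, phiN (x / (l * τ)) / (l * τ) * hsW l =
      gaussianPDFReal 0 (Real.toNNReal ((l * τ) ^ 2)) x * hsW l := by
    intro l hl x
    rw [hs_gauss_pdf _ _ (mul_pos hl hτ)]
  constructor
  · filter_upwards [ae_restrict_mem measurableSet_Ioi] with l hl
    simp_rw [key l hl]
    exact (integrable_gaussianPDFReal _ _).mul_const _
  · refine (hsW_integrable.restrict (s := Set.Ioi (0 : ℝ))).congr ?_
    filter_upwards [ae_restrict_mem measurableSet_Ioi] with l hl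
    simp_rw [key l hl]
    have : ∀ x, ‖gaussianPDFReal 0 (Real.toNNReal ((l * τ) ^ 2)) x * hsW l‖ =
        gaussianPDFReal 0 (Real.toNNReal ((l * τ) ^ 2)) x * hsW l := fun x =>
      Real.norm_of_nonneg (mul_nonneg (gaussianPDFReal_nonneg _ _ _) (hsW_pos l).le)
    simp_rw [this]
    rw [integral_mul_const, integral_gaussianPDFReal_eq_one, one_mul]
    have : 0 < l * τ := mul_pos hl hτ
    simp
    exact ⟨(show (0:ℝ) < l from hl).ne', hτ.ne'⟩

/-- Fubini for a bounded weight times the prior. -/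
lemma hs_fubini (τ : ℝ) (hτ : 0 < τ) (b : ℝ → ℝ) (hb : Measurable b) (C : ℝ)
    (hC : ∀ x, ‖b x‖ ≤ C) :
    ∫ θ, b θ * gHS τ θ =
      ∫ l in Set.Ioi (0 : ℝ), ∫ θ, b θ * (phiN (θ / (l * τ)) / (l * τ) * hsW l) := by
  have hprodI := (hs_prior_integrable τ hτ).bdd_mul (f := fun q : ℝ × ℝ => b q.1) (c := C)
    (hb.comp measurable_fst).aestronglyMeasurable (ae_of_all _ fun q => hC q.1)
  rw [← integral_integral_swap hprodI]
  congr 1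
  ext θ
  rw [integral_const_mul]
  rfl

lemma hs_phi_bound (y θ : ℝ) : ‖phiN (y - θ)‖ ≤ 1 ∧ ‖θ * phiN (y - θ)‖ ≤ |y| + 1 := by
  have h2 : (Real.sqrt (2 * Real.pi))⁻¹ ≤ 1 := by
    apply inv_le_one_of_one_le₀
    rw [Real.one_le_sqrt]
    linarith [Real.pi_gt_three]
  have h3 : 0 < (Real.sqrt (2 * Real.pi))⁻¹ := by positivity
  set u := y - θ with hu
  have hpos : 0 < phiN u := by unfold phiN; positivity
  have he : phiN u ≤ Real.exp (-(u ^ 2) / 2) := by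
    unfold phiN
    have := Real.exp_pos (-(u ^ 2) / 2)
    nlinarith
  have he1 : Real.exp (-(u ^ 2) / 2) ≤ 1 := Real.exp_le_one_iff.2 (by nlinarith [sq_nonneg u])
  have he2 : |u| * Real.exp (-(u ^ 2) / 2) ≤ 1 := by
    have h4 : |u| ≤ Real.exp (u ^ 2 / 2) := by
      have := Real.add_one_le_exp (u ^ 2 / 2)
      nlinarith [sq_abs u, sq_nonneg (|u| - 1)]
    have h5 : Real.exp (u ^ 2 / 2) * Real.exp (-(u ^ 2) / 2) = 1 := by
      rw [← Real.exp_add]; ring_nf; simp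
    have := Real.exp_pos (-(u ^ 2) / 2)
    nlinarith
  rw [norm_mul, Real.norm_of_nonneg hpos.le, Real.norm_eq_abs]
  refine ⟨he.trans he1, ?_⟩
  have h6 : |θ| ≤ |y| + |u| := by
    have : θ = y - u := by rw [hu]; ring
    rw [this]
    exact abs_sub _ _
  calc |θ| * phiN u ≤ (|y| + |u|) * Real.exp (-(u ^ 2) / 2) := by gcongr
    _ = |y| * Real.exp (-(u ^ 2) / 2) + |u| * Real.exp (-(u ^ 2) / 2) := by ring
    _ ≤ |y| * 1 + 1 := by gcongr
    _ = |y| + 1 := by ring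

lemma hs_marg (τ y : ℝ) (hτ : 0 < τ) :
    margDens τ y = ((Real.sqrt (2 * Real.pi))⁻¹ * Real.exp (-(y ^ 2) / 2)) *
      ∫ l in Set.Ioi (0 : ℝ), hsH τ y l := by
  have h := hs_fubini τ hτ (fun θ => phiN (y - θ)) (by have := phiN_measurable; fun_prop) 1
    (fun x => (hs_phi_bound y x).1)
  unfold margDens postDens
  rw [h, ← integral_const_mul]
  refine setIntegral_congr_fun measurableSet_Ioi fun l hl => ?_
  have hs : 0 < l * τ := mul_pos hl hτ
  have e : ∀ θ, phiN (y - θ) * (phiN (θ / (l * τ)) / (l * τ) * hsW l) =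
      ((Real.sqrt (2 * Real.pi))⁻¹ * Real.exp (-(y ^ 2) / 2)) * hsH τ y l *
        gaussianPDFReal ((l * τ) ^ 2 / (1 + (l * τ) ^ 2) * y)
          (Real.toNNReal ((l * τ) ^ 2 / (1 + (l * τ) ^ 2))) θ := by
    intro θ
    rw [← mul_assoc, hs_gauss _ _ _ hs]
    unfold hsH
    ring
  simp_rw [e]
  rw [integral_const_mul, integral_gaussianPDFReal_eq_one, mul_one]
  have : 0 < (l * τ) ^ 2 / (1 + (l * τ) ^ 2) := by positivity
  exact (Real.toNNReal_pos.2 this).ne'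

lemma hs_num (τ y : ℝ) (hτ : 0 < τ) :
    ∫ θ, θ * postDens τ y θ = ((Real.sqrt (2 * Real.pi))⁻¹ * Real.exp (-(y ^ 2) / 2)) * y *
      ∫ l in Set.Ioi (0 : ℝ), ((l * τ) ^ 2 / (1 + (l * τ) ^ 2)) * hsH τ y l := by
  have h := hs_fubini τ hτ (fun θ => θ * phiN (y - θ)) (by have := phiN_measurable; fun_prop)
    (|y| + 1) (fun x => (hs_phi_bound y x).2)
  unfold postDens
  simp_rw [← mul_assoc]
  rw [h, ← integral_const_mul]
  refine setIntegral_congr_fun measurableSet_Ioi fun l hl => ?_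
  have hs : 0 < l * τ := mul_pos hl hτ
  have e : ∀ θ, θ * phiN (y - θ) * (phiN (θ / (l * τ)) / (l * τ) * hsW l) =
      ((Real.sqrt (2 * Real.pi))⁻¹ * Real.exp (-(y ^ 2) / 2)) * hsH τ y l *
        (gaussianPDFReal ((l * τ) ^ 2 / (1 + (l * τ) ^ 2) * y)
          (Real.toNNReal ((l * τ) ^ 2 / (1 + (l * τ) ^ 2))) θ • θ) := by
    intro θ
    have := hs_gauss y _ θ hs
    calc _ = θ * hsW l * (phiN (y - θ) * (phiN (θ / (l * τ)) / (l * τ))) := by ring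
      _ = _ := by
        rw [this, smul_eq_mul]
        unfold hsH
        ring
  simp_rw [e]
  have hv : 0 < (l * τ) ^ 2 / (1 + (l * τ) ^ 2) := by positivity
  rw [integral_const_mul,
    ← integral_gaussianReal_eq_integral_smul (Real.toNNReal_pos.2 hv).ne',
    integral_id_gaussianReal]
  ring

lemma hs_int_pos (τ y : ℝ) : 0 < ∫ l in Set.Ioi (0 : ℝ), hsH τ y l := by
  rw [setIntegral_pos_iff_support_of_nonneg_ae (ae_of_all _ fun l => (hsH_pos τ y l).le)
    (hsH_integrable τ y).integrableOn]
  have : Function.support (hsH τ y) = Set.univ := by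
    ext l; simp [(hsH_pos τ y l).ne']
  rw [this]
  simp

lemma hs_sel_iff (τ y : ℝ) (hτ : 0 < τ) (hy : y ≠ 0) :
    1 / 2 < postMean τ y / y ↔ 0 < ∫ l in Set.Ioi (0 : ℝ), hsF τ y l := by
  have hB := hs_int_pos τ y
  have hF : ∫ l in Set.Ioi (0 : ℝ), hsF τ y l =
      2 * (∫ l in Set.Ioi (0 : ℝ), ((l * τ) ^ 2 / (1 + (l * τ) ^ 2)) * hsH τ y l) -
        ∫ l in Set.Ioi (0 : ℝ), hsH τ y l := by
    simp_rw [hsF_eq]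
    rw [integral_sub ((hsrH_integrable τ y).const_mul 2).integrableOn
      (hsH_integrable τ y).integrableOn, integral_const_mul]
  rw [hF]
  unfold postMean
  rw [hs_num _ _ hτ, hs_marg _ _ hτ]
  set A := ∫ l in Set.Ioi (0 : ℝ), ((l * τ) ^ 2 / (1 + (l * τ) ^ 2)) * hsH τ y l
  set B := ∫ l in Set.Ioi (0 : ℝ), hsH τ y l
  have hc : 0 < (Real.sqrt (2 * Real.pi))⁻¹ * Real.exp (-(y ^ 2) / 2) := by positivity
  set c := (Real.sqrt (2 * Real.pi))⁻¹ * Real.exp (-(y ^ 2) / 2)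
  have : c * y * A / (c * B) / y = A / B := by field_simp
  rw [this, lt_div_iff₀ hB]
  constructor <;> intro h <;> linarith

lemma hs_split (τ y a b : ℝ) (ha : 0 ≤ a) (hab : a ≤ b) :
    ∫ l in Set.Ioi (0 : ℝ), hsF τ y l =
      (∫ l in Set.Ioc 0 a, hsF τ y l) + (∫ l in Set.Ioc a b, hsF τ y l) +
        ∫ l in Set.Ioi b, hsF τ y l := by
  have hI := hsF_integrable τ y
  rw [← Set.Ioc_union_Ioi_eq_Ioi (ha.trans hab), setIntegral_union
      (Set.Ioc_disjoint_Ioi le_rfl) measurableSet_Ioi hI.integrableOn hI.integrableOn,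
    ← Set.Ioc_union_Ioc_eq_Ioc ha hab, setIntegral_union
      (Set.Ioc_disjoint_Ioc_of_le le_rfl) measurableSet_Ioc hI.integrableOn hI.integrableOn]

lemma hs_coef_le (s : ℝ) : (s ^ 2 - 1) / (s ^ 2 + 1) ≤ 1 ∧ -1 ≤ (s ^ 2 - 1) / (s ^ 2 + 1) := by
  constructor
  · rw [div_le_one (by positivity)]; linarith
  · rw [le_div_iff₀ (by positivity)]; nlinarith [sq_nonneg s]

lemma hs_neg (τ y : ℝ) (hτ : 0 < τ) (hτ2 : τ ≤ 1 / 2) (h : Real.exp (y ^ 2 / 2) * τ ≤ 1 / 10) :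
    ∫ l in Set.Ioi (0 : ℝ), hsF τ y l ≤ 0 := by
  have hI := hsF_integrable τ y
  have h1τ : 1 ≤ 1 / τ := by rw [le_div_iff₀ hτ]; linarith
  rw [hs_split τ y 1 (1 / τ) zero_le_one h1τ]
  have A1 : ∫ l in Set.Ioc (0 : ℝ) 1, hsF τ y l ≤ -(1 / 10) := by
    have : ∫ l in Set.Ioc (0 : ℝ) 1, hsF τ y l ≤ ∫ l in Set.Ioc (0 : ℝ) 1, (-(1 / 10) : ℝ) := by
      refine setIntegral_mono_on hI.integrableOn (by simp) measurableSet_Ioc fun l hl => ?_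
      have hs0 : 0 < l * τ := mul_pos hl.1 hτ
      have hs1 : l * τ ≤ 1 / 2 := by nlinarith [hl.2]
      have hs2 : (l * τ) ^ 2 ≤ 1 / 4 := by nlinarith
      have c1 : ((l * τ) ^ 2 - 1) / ((l * τ) ^ 2 + 1) ≤ -(3 / 5) := by
        rw [div_le_iff₀ (by positivity)]; linarith
      have c2 : 1 / 4 ≤ hsW l := by
        unfold hsW
        have : l ^ 2 ≤ 1 := by nlinarith [hl.1, hl.2]
        rw [le_div_iff₀ (by positivity)]
        nlinarith [Real.pi_lt_four, Real.pi_pos]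
      have c3 : 4 / 5 ≤ (Real.sqrt (1 + (l * τ) ^ 2))⁻¹ := by
        rw [le_inv_comm₀ (by norm_num) (by positivity), Real.sqrt_le_left (by norm_num)]
        norm_num; linarith
      have c4 : 1 ≤ Real.exp (y ^ 2 / 2 * ((l * τ) ^ 2 / (1 + (l * τ) ^ 2))) :=
        Real.one_le_exp (by positivity)
      have c5 : 1 / 5 ≤ hsH τ y l := by
        unfold hsH
        calc (1 / 5 : ℝ) = 1 / 4 * (4 / 5 * 1) := by norm_num
          _ ≤ _ := by gcongr
      unfold hsF
      nlinarith
    simpa using this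
  have A2 : ∫ l in Set.Ioc (1 : ℝ) (1 / τ), hsF τ y l ≤ 0 := by
    refine setIntegral_nonpos measurableSet_Ioc fun l hl => ?_
    have hs1 : l * τ ≤ 1 := by have := hl.2; rwa [le_div_iff₀ hτ] at this
    have hs0 : 0 < l * τ := mul_pos (by linarith [hl.1]) hτ
    unfold hsF
    refine mul_nonpos_of_nonpos_of_nonneg ?_ (hsH_pos _ _ _).le
    exact div_nonpos_of_nonpos_of_nonneg (by nlinarith) (by positivity)
  have A3 : ∫ l in Set.Ioi (1 / τ), hsF τ y l ≤ 1 / 10 := by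
    have B : ∫ l in Set.Ioi (1 / τ), hsF τ y l ≤
        ∫ l in Set.Ioi (1 / τ), hsW l * Real.exp (y ^ 2 / 2) := by
      refine integral_mono hI.integrableOn (hsW_integrable.mul_const _).integrableOn fun l => ?_
      have h1 := hsH_le' τ y l
      have h2 := (hs_coef_le (l * τ)).1
      have h3 := hsH_pos τ y l
      simp only [hsF]
      nlinarith
    rw [integral_mul_const] at B
    have h4 := hsW_integral_Ioi (1 / τ) (by positivity)
    rw [one_div_one_div] at h4
    have := Real.exp_pos (y ^ 2 / 2)
    nlinarith
  linarith

lemma hs_lower (τ y δ : ℝ) (hτ : 0 < τ) (hτ1 : τ ≤ 1) (hδ : 0 < δ) (hδ2 : δ ≤ 1 / 2) :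
    (3 / 10) / (1 + 4 / δ ^ 2) ^ 2 * τ * Real.exp (y ^ 2 / 2 * (1 - δ ^ 2))
      - Real.exp (y ^ 2 / 2 * δ ^ 2) - Real.exp (y ^ 2 / 2 * (1 / 2)) * (τ / δ) ≤
      ∫ l in Set.Ioi (0 : ℝ), hsF τ y l := by
  have hI := hsF_integrable τ y
  have hW := hsW_integrable
  have hδτ : 0 < δ / τ := by positivity
  have hle : δ / τ ≤ 1 / τ := by gcongr; linarith
  rw [hs_split τ y (δ / τ) (1 / τ) hδτ.le hle]
  have hlow : ∀ l, -hsH τ y l ≤ hsF τ y l := by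
    intro l
    have h2 := (hs_coef_le (l * τ)).2
    have h3 := hsH_pos τ y l
    simp only [hsF]
    nlinarith
  have hHr : ∀ l r, (l * τ) ^ 2 / (1 + (l * τ) ^ 2) ≤ r →
      hsH τ y l ≤ hsW l * Real.exp (y ^ 2 / 2 * r) := by
    intro l r hr
    refine (hsH_le τ y l).trans ?_
    have := hsW_pos l
    gcongr
  have A1 : -Real.exp (y ^ 2 / 2 * δ ^ 2) ≤ ∫ l in Set.Ioc (0 : ℝ) (δ / τ), hsF τ y l := by
    have B : ∫ l in Set.Ioc (0 : ℝ) (δ / τ), -(hsW l * Real.exp (y ^ 2 / 2 * δ ^ 2)) ≤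
        ∫ l in Set.Ioc (0 : ℝ) (δ / τ), hsF τ y l := by
      refine setIntegral_mono_on (hW.mul_const _).neg.integrableOn hI.integrableOn
        measurableSet_Ioc fun l hl => ?_
      refine le_trans (neg_le_neg (hHr l _ ?_)) (hlow l)
      have hs1 : l * τ ≤ δ := by have := hl.2; rwa [le_div_iff₀ hτ] at this
      have hs0 : 0 < l * τ := mul_pos hl.1 hτ
      rw [div_le_iff₀ (by positivity)]
      have : (l * τ) ^ 2 ≤ δ ^ 2 := by gcongr
      nlinarith [sq_nonneg δ, sq_nonneg (l * τ), mul_nonneg (sq_nonneg δ) (sq_nonneg (l * τ))]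
    rw [integral_neg, integral_mul_const] at B
    have h1 : ∫ l in Set.Ioc (0 : ℝ) (δ / τ), hsW l ≤ 1 := by
      rw [← hsW_integral]
      exact setIntegral_mono_set hW.integrableOn (ae_of_all _ fun l => (hsW_pos l).le)
        (Set.Ioc_subset_Ioi_self.eventuallyLE)
    have := Real.exp_pos (y ^ 2 / 2 * δ ^ 2)
    nlinarith
  have A2 : -(Real.exp (y ^ 2 / 2 * (1 / 2)) * (τ / δ)) ≤
      ∫ l in Set.Ioc (δ / τ) (1 / τ), hsF τ y l := by
    have B : ∫ l in Set.Ioc (δ / τ) (1 / τ), -(hsW l * Real.exp (y ^ 2 / 2 * (1 / 2))) ≤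
        ∫ l in Set.Ioc (δ / τ) (1 / τ), hsF τ y l := by
      refine setIntegral_mono_on (hW.mul_const _).neg.integrableOn hI.integrableOn
        measurableSet_Ioc fun l hl => ?_
      refine le_trans (neg_le_neg (hHr l _ ?_)) (hlow l)
      have hs1 : l * τ ≤ 1 := by have := hl.2; rwa [le_div_iff₀ hτ] at this
      have hs0 : 0 < l * τ := mul_pos (hδτ.trans hl.1) hτ
      rw [div_le_iff₀ (by positivity)]
      nlinarith
    rw [integral_neg, integral_mul_const] at B
    have h1 : ∫ l in Set.Ioc (δ / τ) (1 / τ), hsW l ≤ τ / δ := by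
      have h4 := hsW_integral_Ioi (δ / τ) hδτ
      rw [one_div_div] at h4
      refine le_trans ?_ h4
      exact setIntegral_mono_set hW.integrableOn (ae_of_all _ fun l => (hsW_pos l).le)
        (Set.Ioc_subset_Ioi_self.eventuallyLE)
    have := Real.exp_pos (y ^ 2 / 2 * (1 / 2))
    nlinarith
  have A3 : (3 / 10) / (1 + 4 / δ ^ 2) ^ 2 * τ * Real.exp (y ^ 2 / 2 * (1 - δ ^ 2)) ≤
      ∫ l in Set.Ioi (1 / τ), hsF τ y l := by
    have hsub : Set.Ioc (1 / δ / τ) (2 / δ / τ) ⊆ Set.Ioi (1 / τ) := by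
      intro l hl
      refine lt_of_le_of_lt ?_ hl.1
      have : 1 ≤ 1 / δ := by rw [le_div_iff₀ hδ]; linarith
      gcongr
    have B1 : ∫ l in Set.Ioc (1 / δ / τ) (2 / δ / τ), hsF τ y l ≤
        ∫ l in Set.Ioi (1 / τ), hsF τ y l := by
      refine setIntegral_mono_set hI.integrableOn ?_ hsub.eventuallyLE
      filter_upwards [ae_restrict_mem measurableSet_Ioi] with l hl
      have hs1 : 1 < l * τ := by
        have : 1 / τ < l := hl
        rwa [div_lt_iff₀ hτ] at this
      simp only [Pi.zero_apply, hsF]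
      refine mul_nonneg (div_nonneg ?_ (by positivity)) (hsH_pos _ _ _).le
      nlinarith
    refine le_trans ?_ B1
    set D := 1 + 4 / δ ^ 2 with hD
    have hD1 : 1 ≤ D := by rw [hD]; have : 0 < 4 / δ ^ 2 := by positivity
                           linarith
    set K := (3 / 10) / D ^ 2 * τ ^ 2 * Real.exp (y ^ 2 / 2 * (1 - δ ^ 2)) with hK
    have B2 : ∫ l in Set.Ioc (1 / δ / τ) (2 / δ / τ), K ≤
        ∫ l in Set.Ioc (1 / δ / τ) (2 / δ / τ), hsF τ y l := by
      refine setIntegral_mono_on (by simp) hI.integrableOn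
        measurableSet_Ioc fun l hl => ?_
      have hs1 : 1 / δ < l * τ := by have := hl.1; rwa [div_lt_iff₀ hτ] at this
      have hs2 : l * τ ≤ 2 / δ := by have := hl.2; rwa [le_div_iff₀ hτ] at this
      have hd0 : 0 < 1 / δ := by positivity
      have hd2 : 2 ≤ 1 / δ := by rw [le_div_iff₀ hδ]; linarith
      have hlow2 : (1 / δ) ^ 2 ≤ (l * τ) ^ 2 := by gcongr
      have hs0 : 0 < l * τ := hd0.trans hs1
      have hup : (l * τ) ^ 2 ≤ 4 / δ ^ 2 := by
        calc (l * τ) ^ 2 ≤ (2 / δ) ^ 2 := by gcongr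
          _ = 4 / δ ^ 2 := by rw [div_pow]; norm_num
      have c1 : 3 / 5 ≤ ((l * τ) ^ 2 - 1) / ((l * τ) ^ 2 + 1) := by
        rw [le_div_iff₀ (by positivity)]; nlinarith
      have c2 : (1 / 2) * τ ^ 2 / D ≤ hsW l := by
        have e : (1 + l ^ 2) * τ ^ 2 ≤ D := by
          have : τ ^ 2 ≤ 1 := by nlinarith
          rw [hD]; nlinarith
        have hpi : 1 / 2 ≤ 2 / Real.pi := by
          rw [le_div_iff₀ Real.pi_pos]; linarith [Real.pi_lt_four]
        rw [hsW_eq]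
        have : τ ^ 2 / D ≤ (1 + l ^ 2)⁻¹ := by
          rw [div_le_iff₀ (by positivity), ← div_eq_inv_mul, le_div_iff₀ (by positivity)]
          linarith
        calc (1 / 2) * τ ^ 2 / D = 1 / 2 * (τ ^ 2 / D) := by ring
          _ ≤ _ := by gcongr
      have c3 : 1 / D ≤ (Real.sqrt (1 + (l * τ) ^ 2))⁻¹ := by
        rw [one_div]
        gcongr
        rw [Real.sqrt_le_left (by linarith)]
        nlinarith
      have c4 : Real.exp (y ^ 2 / 2 * (1 - δ ^ 2)) ≤
          Real.exp (y ^ 2 / 2 * ((l * τ) ^ 2 / (1 + (l * τ) ^ 2))) := by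
        gcongr
        rw [le_div_iff₀ (by positivity)]
        have : 1 ≤ δ ^ 2 * (l * τ) ^ 2 := by
          calc (1 : ℝ) = δ ^ 2 * (1 / δ) ^ 2 := by field_simp
            _ ≤ _ := by gcongr
        nlinarith [sq_nonneg δ]
      have c5 : (1 / 2) * τ ^ 2 / D * (1 / D * Real.exp (y ^ 2 / 2 * (1 - δ ^ 2))) ≤ hsH τ y l := by
        unfold hsH
        have := hsW_pos l
        gcongr
      calc K = 3 / 5 * ((1 / 2) * τ ^ 2 / D * (1 / D * Real.exp (y ^ 2 / 2 * (1 - δ ^ 2)))) := by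
            rw [hK]; ring
        _ ≤ hsF τ y l := by
            unfold hsF
            have : 0 < D := by linarith
            gcongr
    refine le_trans ?_ B2
    have hvol : (2 / δ / τ - 1 / δ / τ) = 1 / δ / τ := by ring
    have hnn : 0 ≤ 1 / δ / τ := by positivity
    simp only [integral_const, MeasurableSet.univ, measureReal_restrict_apply, Set.univ_inter,
      Real.volume_real_Ioc, smul_eq_mul, hvol, max_eq_left hnn]
    have h1δ : 1 ≤ 1 / δ := by rw [le_div_iff₀ hδ]; linarith
    calc (3 / 10) / D ^ 2 * τ * Real.exp (y ^ 2 / 2 * (1 - δ ^ 2)) = 1 / τ * K := by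
          rw [hK]; field_simp
      _ ≤ 1 / δ / τ * K := by
          have : 0 ≤ K := by positivity
          gcongr
  linarith

lemma zet_sq (τ : ℝ) (hτ : 0 < τ) (hτ1 : τ ≤ 1) : zet τ ^ 2 = 2 * Real.log (1 / τ) := by
  unfold zet
  rw [Real.sq_sqrt]
  have : 0 ≤ Real.log (1 / τ) := Real.log_nonneg (by rw [le_div_iff₀ hτ]; linarith)
  linarith

lemma tau_eq_exp (τ : ℝ) (hτ : 0 < τ) : τ = Real.exp (-Real.log (1 / τ)) := by
  rw [one_div, Real.log_inv, neg_neg, Real.exp_log hτ]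

lemma log_tendsto : Tendsto (fun τ : ℝ => Real.log (1 / τ)) (nhdsWithin 0 (Set.Ioi 0)) atTop := by
  have := Real.tendsto_log_atTop.comp (tendsto_inv_nhdsGT_zero (𝕜 := ℝ))
  simpa [Function.comp_def] using this

lemma hs_notsel (k : ℝ) (hk0 : 0 ≤ k) (hk : k < 1) :
    ∀ᶠ τ in nhdsWithin (0 : ℝ) (Set.Ioi 0), ∀ y, |y| ≤ k * zet τ →
      ¬ 1 / 2 < postMean τ y / y := by
  have hT : Tendsto (fun τ : ℝ => Real.exp (-((1 - k ^ 2) * Real.log (1 / τ))))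
      (nhdsWithin 0 (Set.Ioi 0)) (nhds 0) :=
    Real.tendsto_exp_neg_atTop_nhds_zero.comp
      (log_tendsto.const_mul_atTop (by nlinarith))
  have h1 := hT.eventually (eventually_le_nhds (by norm_num : (0 : ℝ) < 1 / 10))
  have h2 : ∀ᶠ τ in nhdsWithin (0 : ℝ) (Set.Ioi 0), τ ≤ 1 / 2 :=
    nhdsWithin_le_nhds (eventually_le_nhds (by norm_num))
  filter_upwards [h1, h2, self_mem_nhdsWithin] with τ h1 h2 hτ y hy
  have hτ : 0 < τ := hτ
  rcases eq_or_ne y 0 with rfl | hy0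
  · norm_num
  rw [hs_sel_iff τ y hτ hy0, not_lt]
  refine hs_neg τ y hτ h2 (le_trans ?_ h1)
  have hz := zet_sq τ hτ (by linarith)
  have hy2 : y ^ 2 ≤ k ^ 2 * zet τ ^ 2 := by
    rw [← sq_abs, ← mul_pow]; gcongr
  nth_rewrite 1 [tau_eq_exp τ hτ]
  rw [← Real.exp_add]
  gcongr
  rw [hz] at hy2
  linarith

lemma hs_sel (k : ℝ) (hk : 1 < k) :
    ∀ᶠ τ in nhdsWithin (0 : ℝ) (Set.Ioi 0), ∀ y, k * zet τ ≤ |y| →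
      1 / 2 < postMean τ y / y := by
  obtain ⟨δ, hδ0, hδ2, hδk⟩ : ∃ δ : ℝ, 0 < δ ∧ δ ≤ 1 / 2 ∧ 1 < k ^ 2 * (1 - 2 * δ ^ 2) := by
    have hc : Tendsto (fun δ : ℝ => k ^ 2 * (1 - 2 * δ ^ 2)) (nhdsWithin 0 (Set.Ioi 0))
        (nhds (k ^ 2 * (1 - 2 * 0 ^ 2))) :=
      (Continuous.tendsto (by fun_prop) 0).mono_left nhdsWithin_le_nhds
    have h1 := hc.eventually (eventually_gt_nhds (by nlinarith : (1 : ℝ) < k ^ 2 * (1 - 2 * 0 ^ 2)))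
    have h2 : ∀ᶠ τ in nhdsWithin (0 : ℝ) (Set.Ioi 0), τ ≤ 1 / 2 :=
      nhdsWithin_le_nhds (eventually_le_nhds (by norm_num))
    obtain ⟨δ, a, b, d⟩ := (h1.and (h2.and self_mem_nhdsWithin)).exists
    exact ⟨δ, d, b, a⟩
  set c := (3 / 10) / (1 + 4 / δ ^ 2) ^ 2 with hc
  have hcpos : 0 < c := by positivity
  set β := k ^ 2 * (1 - 2 * δ ^ 2) - 1 with hβ
  have hT1 : Tendsto (fun τ : ℝ => Real.exp (β * Real.log (1 / τ)))
      (nhdsWithin 0 (Set.Ioi 0)) atTop :=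
    Real.tendsto_exp_atTop.comp (log_tendsto.const_mul_atTop (by rw [hβ]; linarith))
  have hT2 : Tendsto (fun τ : ℝ => Real.exp ((1 / 4) * Real.log (1 / τ)))
      (nhdsWithin 0 (Set.Ioi 0)) atTop :=
    Real.tendsto_exp_atTop.comp (log_tendsto.const_mul_atTop (by norm_num))
  have h2 : ∀ᶠ τ in nhdsWithin (0 : ℝ) (Set.Ioi 0), τ ≤ 1 / 2 :=
    nhdsWithin_le_nhds (eventually_le_nhds (by norm_num))
  filter_upwards [hT1.eventually_gt_atTop (2 / c), hT2.eventually_gt_atTop (2 / (c * δ)), h2,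
    self_mem_nhdsWithin] with τ g1 g2 h2 hτ y hy
  have hτ : 0 < τ := hτ
  have hz := zet_sq τ hτ (by linarith)
  set L := Real.log (1 / τ) with hL
  have hLpos : 0 < L := Real.log_pos (by rw [lt_div_iff₀ hτ]; linarith)
  have hz0 : 0 ≤ zet τ := Real.sqrt_nonneg _
  have hy2 : k ^ 2 * L ≤ y ^ 2 / 2 := by
    have : (k * zet τ) ^ 2 ≤ |y| ^ 2 := by gcongr
    rw [sq_abs, mul_pow, hz] at this
    linarith
  have hy0 : y ≠ 0 := by
    rintro rfl
    have : 0 < k ^ 2 * L := by positivity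
    norm_num at hy2
    linarith
  rw [hs_sel_iff τ y hτ hy0]
  refine lt_of_lt_of_le ?_ (hs_lower τ y δ hτ (by linarith) hδ0 hδ2)
  rw [← hc]
  set Q := y ^ 2 / 2 with hQ
  have hτL : τ = Real.exp (-L) := tau_eq_exp τ hτ
  have hδ4 : δ ^ 2 ≤ 1 / 4 := by nlinarith
  have hkL : L ≤ k ^ 2 * L := by nlinarith
  have i1 : Real.exp (Q * δ ^ 2) < c / 2 * τ * Real.exp (Q * (1 - δ ^ 2)) := by
    have e1 : Real.exp (β * L) * Real.exp (Q * δ ^ 2) ≤ τ * Real.exp (Q * (1 - δ ^ 2)) := by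
      rw [hτL, ← Real.exp_add, ← Real.exp_add]
      refine Real.exp_le_exp.2 ?_
      have : k ^ 2 * L * (1 - 2 * δ ^ 2) ≤ Q * (1 - 2 * δ ^ 2) := by
        apply mul_le_mul_of_nonneg_right hy2; linarith
      rw [hβ]; nlinarith
    have e2 : 1 < c / 2 * Real.exp (β * L) := by
      rw [div_lt_iff₀ hcpos] at g1; linarith
    have := Real.exp_pos (Q * δ ^ 2)
    calc Real.exp (Q * δ ^ 2) < (c / 2 * Real.exp (β * L)) * Real.exp (Q * δ ^ 2) := by nlinarith
      _ = c / 2 * (Real.exp (β * L) * Real.exp (Q * δ ^ 2)) := by ring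
      _ ≤ c / 2 * (τ * Real.exp (Q * (1 - δ ^ 2))) := by gcongr
      _ = _ := by ring
  have i2 : Real.exp (Q * (1 / 2)) * (τ / δ) < c / 2 * τ * Real.exp (Q * (1 - δ ^ 2)) := by
    have e1 : Real.exp (1 / 4 * L) * Real.exp (Q * (1 / 2)) ≤ Real.exp (Q * (1 - δ ^ 2)) := by
      rw [← Real.exp_add]
      gcongr
      nlinarith
    have e2 : 1 / δ < c / 2 * Real.exp (1 / 4 * L) := by
      rw [div_lt_iff₀ (by positivity)] at g2 ⊢; linarith
    have := Real.exp_pos (Q * (1 / 2))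
    calc Real.exp (Q * (1 / 2)) * (τ / δ) = τ * Real.exp (Q * (1 / 2)) * (1 / δ) := by ring
      _ < τ * Real.exp (Q * (1 / 2)) * (c / 2 * Real.exp (1 / 4 * L)) := by gcongr
      _ = c / 2 * τ * (Real.exp (1 / 4 * L) * Real.exp (Q * (1 / 2))) := by ring
      _ ≤ c / 2 * τ * Real.exp (Q * (1 - δ ^ 2)) := by gcongr
  linarith

lemma hs_squeeze (E : ℕ → ℝ≥0∞) (r : ℕ → ℝ) (hr : Tendsto r atTop (nhds 0))
    (h : ∀ᶠ n in atTop, 1 - ENNReal.ofReal (r n) ≤ E n) (h1 : ∀ n, E n ≤ 1) :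
    Tendsto E atTop (nhds 1) := by
  have h2 : Tendsto (fun n => 1 - ENNReal.ofReal (r n)) atTop (nhds 1) := by
    have h3 : Tendsto (fun n => ENNReal.ofReal (r n)) atTop (nhds 0) := by
      simpa using ENNReal.tendsto_ofReal hr
    simpa using ENNReal.Tendsto.sub (tendsto_const_nhds (x := (1 : ℝ≥0∞))) h3
      (Or.inl ENNReal.one_ne_top)
  exact tendsto_of_tendsto_of_tendsto_of_le_of_le' h2 tendsto_const_nhds h
    (Eventually.of_forall h1)

theorem stmt_7
    (kS kM kL : ℝ) (hkS : 0 < kS) (hkM : kM < 1) (hkL : 1 < kL)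
    (τ : ℕ → ℝ) (hτpos : ∀ n, 0 < τ n) (hτ : Tendsto τ atTop (nhds 0))
    (f : ℕ → ℝ) (hf : Tendsto f atTop atTop)
    (γ : ℕ → ℝ) (hγpos : ∀ n, 0 < γ n)
    (c : ℝ) (hc0 : 0 ≤ c) (hc : c ≤ 1 / 2) (hγ : Tendsto γ atTop (nhds c))
    (hzet : (fun n => zet (γ n)) =o[atTop] fun n => zet (τ n))
    (θ₀ : (n : ℕ) → Fin (n + 1) → ℝ) :
    (Tendsto
      (fun n =>
        Pdata (θ₀ n)
          {y : Fin (n + 1) → ℝ |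
            (1 - 2 * γ n) * (({i | θ₀ n i = 0} : Set (Fin (n + 1))).ncard : ℝ) ≤
              (({i | θ₀ n i = 0 ∧ ¬ 1 / 2 < postMean (τ n) (y i) / y i} : Set (Fin (n + 1))).ncard : ℝ)})
      atTop (nhds 1)) ∧
    (Tendsto
      (fun n =>
        Pdata (θ₀ n)
          {y : Fin (n + 1) → ℝ |
            (1 - γ n) * (({i | kL * zet (τ n) ≤ |θ₀ n i|} : Set (Fin (n + 1))).ncard : ℝ) ≤ (({i | kL * zet (τ n) ≤ |θ₀ n i| ∧ 1 / 2 < postMean (τ n) (y i) / y i} : Set (Fin (n + 1))).ncard : ℝ)})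
      atTop (nhds 1)) ∧
    (∀ i : (n : ℕ) → Fin (n + 1),
      (∀ n, θ₀ n (i n) ≠ 0 ∧
        (|θ₀ n (i n)| ≤ kS * τ n ∨
          (f n * τ n ≤ |θ₀ n (i n)| ∧ |θ₀ n (i n)| ≤ kM * zet (τ n)))) →
      Tendsto
        (fun n =>
          Pdata (θ₀ n)
            {y : Fin (n + 1) → ℝ |
              ¬ 1 / 2 < postMean (τ n) (y (i n)) / y (i n)})
        atTop (nhds 1)) := by
  have hτw : Tendsto τ atTop (nhdsWithin 0 (Set.Ioi 0)) :=
    tendsto_nhdsWithin_iff.2 ⟨hτ, Eventually.of_forall fun n => hτpos n⟩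
  have hprob : ∀ n, IsProbabilityMeasure (Pdata (θ₀ n)) := fun n => by
    unfold Pdata; infer_instance
  have hZ : Tendsto (fun n => zet (τ n)) atTop atTop := by
    have := (log_tendsto.comp hτw).const_mul_atTop (by norm_num : (0 : ℝ) < 2)
    exact Real.tendsto_sqrt_atTop.comp this
  have hZ0 : ∀ n, 0 ≤ zet (τ n) := fun n => Real.sqrt_nonneg _
  have hexp : ∀ d : ℝ, 0 < d →
      Tendsto (fun n => Real.exp (-((d * zet (τ n)) ^ 2) / 2)) atTop (nhds 0) := by
    intro d hd
    have h1 : Tendsto (fun n => (d * zet (τ n)) ^ 2 / 2) atTop atTop :=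
      ((tendsto_pow_atTop (two_ne_zero)).comp (hZ.const_mul_atTop hd)).atTop_div_const
        (by norm_num)
    refine (Real.tendsto_exp_neg_atTop_nhds_zero.comp h1).congr fun n => ?_
    simp only [Function.comp_def]
    congr 1
    ring
  have hratio : ∀ d : ℝ, 0 < d →
      Tendsto (fun n => 2 * Real.exp (-((d * zet (τ n)) ^ 2) / 2) / γ n) atTop (nhds 0) := by
    intro d hd
    have hup : Tendsto (fun n => 2 * Real.exp (-(((d / 2) * zet (τ n)) ^ 2) / 2)) atTop (nhds 0) := by
      simpa using (hexp (d / 2) (by positivity)).const_mul 2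
    refine squeeze_zero' (Eventually.of_forall fun n => by have := hγpos n; positivity) ?_ hup
    have hγ1 : ∀ᶠ n in atTop, γ n < 1 := hγ.eventually (eventually_lt_nhds (by linarith))
    filter_upwards [hγ1, hzet.bound (by positivity : 0 < d / 2)] with n h1 h2
    rw [Real.norm_of_nonneg (show 0 ≤ zet (γ n) from Real.sqrt_nonneg _),
      Real.norm_of_nonneg (hZ0 n)] at h2
    rw [div_le_iff₀ (hγpos n)]
    have hz := zet_sq (γ n) (hγpos n) h1.le
    have h3 : zet (γ n) ^ 2 ≤ (d / 2 * zet (τ n)) ^ 2 :=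
      pow_le_pow_left₀ (Real.sqrt_nonneg _) h2 2
    nth_rewrite 1 [tau_eq_exp (γ n) (hγpos n)]
    rw [mul_assoc, ← Real.exp_add]
    refine mul_le_mul_of_nonneg_left (Real.exp_le_exp.2 ?_) (by norm_num)
    rw [hz] at h3
    nlinarith [sq_nonneg (d * zet (τ n))]
  refine ⟨?_, ?_, ?_⟩
  · refine hs_squeeze _ (fun n => 2 * Real.exp (-((1 / 2 * zet (τ n)) ^ 2) / 2) / (2 * γ n)) ?_ ?_
      (fun n => prob_le_one)
    · have := (hratio (1 / 2) (by norm_num)).div_const 2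
      rw [zero_div] at this
      refine this.congr fun n => ?_
      rw [div_div, mul_comm (γ n)]
    · filter_upwards [hτw.eventually (hs_notsel (1 / 2) (by norm_num) (by norm_num))] with n hn
      refine hs_frac (θ₀ n) {i | θ₀ n i = 0} (1 / 2 * zet (τ n)) (2 * γ n)
        (by have := hZ0 n; positivity) (by have := hγpos n; positivity)
        (fun x => ¬ 1 / 2 < postMean (τ n) x / x) ?_
      intro i hi x hx
      have hi : θ₀ n i = 0 := hi
      rw [hi, sub_zero] at hx
      exact hn x hx
  · have hd : 0 < (kL - 1) / 2 := by linarith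
    refine hs_squeeze _ _ (hratio ((kL - 1) / 2) hd) ?_ (fun n => prob_le_one)
    filter_upwards [hτw.eventually (hs_sel ((kL + 1) / 2) (by linarith))] with n hn
    refine hs_frac (θ₀ n) {i | kL * zet (τ n) ≤ |θ₀ n i|} ((kL - 1) / 2 * zet (τ n)) (γ n)
      (mul_nonneg hd.le (hZ0 n)) (hγpos n) (fun x => 1 / 2 < postMean (τ n) x / x) ?_
    intro i hi x hx
    have hi : kL * zet (τ n) ≤ |θ₀ n i| := hi
    refine hn x ?_
    have := abs_sub_abs_le_abs_sub (θ₀ n i) x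
    rw [abs_sub_comm] at this
    linarith
  · intro i hi
    set m := max kM (1 / 2) with hm
    have hm1 : m < 1 := max_lt hkM (by norm_num)
    have hm2 : 1 / 2 ≤ m := le_max_right _ _
    have hd : 0 < (1 - m) / 2 := by linarith
    have hr : Tendsto (fun n => 2 * Real.exp (-(((1 - m) / 2 * zet (τ n)) ^ 2) / 2) / (1 / 2))
        atTop (nhds 0) := by
      simpa using ((hexp _ hd).const_mul 2).div_const (1 / 2)
    refine hs_squeeze _ _ hr ?_ (fun n => prob_le_one)
    have hS : ∀ᶠ n in atTop, kS * τ n ≤ 1 / 2 := by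
      have : Tendsto (fun n => kS * τ n) atTop (nhds 0) := by simpa using hτ.const_mul kS
      exact this.eventually (eventually_le_nhds (by norm_num))
    filter_upwards [hτw.eventually (hs_notsel ((1 + m) / 2) (by linarith) (by linarith)), hS,
      hZ.eventually_ge_atTop 1] with n hn hSn hZn
    have hθ : |θ₀ n (i n)| ≤ m * zet (τ n) := by
      rcases (hi n).2 with h | h
      · refine h.trans (hSn.trans ?_)
        nlinarith
      · refine h.2.trans ?_
        exact mul_le_mul_of_nonneg_right (le_max_left _ _) (hZ0 n)
    refine (hs_frac (θ₀ n) {i n} ((1 - m) / 2 * zet (τ n)) (1 / 2)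
      (mul_nonneg hd.le (hZ0 n)) (by norm_num)
      (fun x => ¬ 1 / 2 < postMean (τ n) x / x) ?_).trans (measure_mono ?_)
    · intro j hj x hx
      have hj : j = i n := hj
      subst hj
      refine hn x ?_
      have := abs_sub_abs_le_abs_sub x (θ₀ n (i n))
      linarith
    · intro y hy
      have hy : (1 - 1 / 2 : ℝ) * ((({i n} : Set (Fin (n + 1))).ncard : ℕ) : ℝ) ≤
        (({j | j ∈ ({i n} : Set (Fin (n + 1))) ∧ ¬ 1 / 2 < postMean (τ n) (y j) / y j} :
          Set (Fin (n + 1))).ncard : ℝ) := hy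
      by_contra hcon
      have hcon : ¬ ¬ 1 / 2 < postMean (τ n) (y (i n)) / y (i n) := hcon
      have hempty : ({j | j ∈ ({i n} : Set (Fin (n + 1))) ∧
          ¬ 1 / 2 < postMean (τ n) (y j) / y j} : Set (Fin (n + 1))) = ∅ := by
        ext j
        refine ⟨fun h => ?_, fun h => h.elim⟩
        obtain ⟨h1, h2⟩ := h
        have h1 : j = i n := h1
        subst h1
        exact hcon h2
      rw [hempty, Set.ncard_singleton, Set.ncard_empty] at hy
      norm_num at hy

end
end
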